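/- Normalized pressure decay. For every M > 0 and every integer k ≥ 0 there exists a constant c(k,M) such that: if R₀ > 0, (u,p) is a smooth solution of the steady Navier–Stokes equations on ℝ³ \ closedBall(0,R₀) and |u(x)| ≤ C*/(R₀+|x|) on ℝ³ \ closedBall(0,R₀) for some C* ≤ M, then there exists a constant p₀ ∈ ℝ such that the normalized pressure p − p₀ satisfies |∇^k (p − p₀)(x)| ≤ c(k,M) C*/(R₀+|x|)^{k+2} for all x with |x| ≥ 2R₀. -/

import Mathlib

open MeasureTheory Real Metric Filter

noncomputable section

abbrev E3 : Type := EuclideanSpace ℝ (Fin 3)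

def ee (j : Fin 3) : E3 := EuclideanSpace.single j 1

def pd (f : E3 → ℝ) (j : Fin 3) (x : E3) : ℝ := fderiv ℝ f x (ee j)

def pd2 (f : E3 → ℝ) (j : Fin 3) (x : E3) : ℝ :=
  fderiv ℝ (fun y => fderiv ℝ f y (ee j)) x (ee j)

/-- steady Navier–Stokes system on `s` -/
def IsNS (s : Set E3) (u : E3 → E3) (p : E3 → ℝ) : Prop :=
  (∀ x ∈ s, ∀ i, -(∑ j, pd2 (fun y => u y i) j x)
      + (∑ j, u x j * pd (fun y => u y i) j x) + pd p i x = 0)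
  ∧ ∀ x ∈ s, (∑ j, pd (fun y => u y j) j x) = 0

open scoped ContDiff Topology

/-- The Laplacian of a scalar function, as a sum of pure second partial derivatives. -/
def lap (f : E3 → ℝ) (x : E3) : ℝ := ∑ j, pd2 f j x

theorem pd2_eq_pd_pd (f : E3 → ℝ) (j : Fin 3) : pd2 f j = pd (pd f j) j := rfl

section PartialDerivatives

variable {Ω : Set E3} {f g : E3 → ℝ} {x : E3}

theorem smooth_differentiableAt (hΩ : IsOpen Ω) (hf : ContDiffOn ℝ ∞ f Ω) (hx : x ∈ Ω) :
    DifferentiableAt ℝ f x :=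
  (hf.contDiffAt (hΩ.mem_nhds hx)).differentiableAt (by simp)

theorem smooth_pd (hΩ : IsOpen Ω) (hf : ContDiffOn ℝ ∞ f Ω) (j : Fin 3) :
    ContDiffOn ℝ ∞ (pd f j) Ω :=
  (hf.fderiv_of_isOpen (m := ∞) hΩ (by simp)).clm_apply contDiffOn_const

theorem pd_congr (hΩ : IsOpen Ω) (h : Set.EqOn f g Ω) (j : Fin 3) :
    Set.EqOn (pd f j) (pd g j) Ω := fun x hx => by
  have : f =ᶠ[𝓝 x] g := h.eventuallyEq_of_mem (hΩ.mem_nhds hx)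
  simp only [pd, this.fderiv_eq]

theorem pd_add (hf : DifferentiableAt ℝ f x) (hg : DifferentiableAt ℝ g x) (j : Fin 3) :
    pd (fun y => f y + g y) j x = pd f j x + pd g j x := by
  simp [pd, fderiv_fun_add hf hg]

theorem pd_sub (hf : DifferentiableAt ℝ f x) (hg : DifferentiableAt ℝ g x) (j : Fin 3) :
    pd (fun y => f y - g y) j x = pd f j x - pd g j x := by
  simp [pd, fderiv_fun_sub hf hg]

theorem pd_mul (hf : DifferentiableAt ℝ f x) (hg : DifferentiableAt ℝ g x) (j : Fin 3) :
    pd (fun y => f y * g y) j x = pd f j x * g x + f x * pd g j x := by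
  simp [pd, fderiv_fun_mul hf hg]
  ring

theorem pd_const_mul (c : ℝ) (f : E3 → ℝ) (j : Fin 3) (x : E3) :
    pd (fun y => c * f y) j x = c * pd f j x := by
  have := congrArg (fun T => T x (ee j)) (fderiv_const_smul_field (𝕜 := ℝ) (f := f) c)
  simpa [pd, Pi.smul_def] using this

theorem pd_sum {ι : Type*} [Fintype ι] {F : ι → E3 → ℝ} (h : ∀ i, DifferentiableAt ℝ (F i) x)
    (j : Fin 3) : pd (fun y => ∑ i, F i y) j x = ∑ i, pd (F i) j x := by
  simp [pd, fderiv_fun_sum (u := Finset.univ) (fun i _ => h i)]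

theorem pd_coord (i j : Fin 3) (x : E3) : pd (fun y => y i) j x = if i = j then 1 else 0 := by
  have : (fun y : E3 => y i) = EuclideanSpace.proj (𝕜 := ℝ) i := rfl
  simp only [pd, this, ContinuousLinearMap.fderiv]
  simp [ee]

theorem pd_comm (hΩ : IsOpen Ω) (hf : ContDiffOn ℝ ∞ f Ω) (i j : Fin 3) (hx : x ∈ Ω) :
    pd (pd f i) j x = pd (pd f j) i x := by
  have hfx := hf.contDiffAt (hΩ.mem_nhds hx)
  have hs := hfx.isSymmSndFDerivAt (by simpa using WithTop.coe_le_coe.2 (le_top : (2 : ℕ∞) ≤ ⊤))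
    (ee i) (ee j)
  have hd : DifferentiableAt ℝ (fderiv ℝ f) x :=
    (hfx.fderiv_right (m := 1) (by norm_cast)).differentiableAt (by simp)
  have key : ∀ a b, pd (pd f a) b x = fderiv ℝ (fderiv ℝ f) x (ee b) (ee a) := fun a b => by
    change fderiv ℝ (fun y => fderiv ℝ f y (ee a)) x (ee b) = _
    rw [fderiv_clm_apply hd (differentiableAt_const _)]
    simp
  rw [key, key, hs]

theorem pd_affine (f : E3 → ℝ) (x₀ : E3) (r : ℝ) (j : Fin 3) (y : E3) :
    pd (fun z => f (x₀ + r • z)) j y = r * pd f j (x₀ + r • y) := by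
  have := congrArg (fun T => T (ee j))
    (fderiv_comp_smul (𝕜 := ℝ) (f := fun z => f (x₀ + z)) (x := y) r)
  simpa [pd, fderiv_comp_add_left] using this

theorem pd2_affine (f : E3 → ℝ) (x₀ : E3) (r : ℝ) (j : Fin 3) (y : E3) :
    pd2 (fun z => f (x₀ + r • z)) j y = r ^ 2 * pd2 f j (x₀ + r • y) := by
  rw [pd2_eq_pd_pd, funext (pd_affine f x₀ r j), pd_const_mul, pd_affine, pd2_eq_pd_pd]
  ring

theorem lap_affine (f : E3 → ℝ) (x₀ : E3) (r : ℝ) (y : E3) :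
    lap (fun z => f (x₀ + r • z)) y = r ^ 2 * lap f (x₀ + r • y) := by
  simp [lap, pd2_affine, Finset.mul_sum]

theorem smooth_affine (hf : ContDiffOn ℝ ∞ f Ω) (x₀ : E3) (r : ℝ) :
    ContDiffOn ℝ ∞ (fun z => f (x₀ + r • z)) ((fun z => x₀ + r • z) ⁻¹' Ω) :=
  hf.comp (by fun_prop) (Set.mapsTo_preimage _ _)

theorem lap_sub (hΩ : IsOpen Ω) (hf : ContDiffOn ℝ ∞ f Ω) (hg : ContDiffOn ℝ ∞ g Ω) (hx : x ∈ Ω) :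
    lap (fun y => f y - g y) x = lap f x - lap g x := by
  simp only [lap, pd2_eq_pd_pd, ← Finset.sum_sub_distrib]
  refine Finset.sum_congr rfl fun j _ => ?_
  rw [pd_congr hΩ (g := fun y => pd f j y - pd g j y) (fun y hy =>
    pd_sub (smooth_differentiableAt hΩ hf hy) (smooth_differentiableAt hΩ hg hy) j) j hx]
  exact pd_sub (smooth_differentiableAt hΩ (smooth_pd hΩ hf j) hx)
    (smooth_differentiableAt hΩ (smooth_pd hΩ hg j) hx) j

theorem lap_const_mul (c : ℝ) (f : E3 → ℝ) (x : E3) :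
    lap (fun y => c * f y) x = c * lap f x := by
  simp only [lap, pd2_eq_pd_pd, Finset.mul_sum]
  refine Finset.sum_congr rfl fun j _ => ?_
  rw [funext (pd_const_mul c f j), pd_const_mul]

theorem lap_pd (hΩ : IsOpen Ω) (hf : ContDiffOn ℝ ∞ f Ω) (k : Fin 3) (hx : x ∈ Ω) :
    lap (pd f k) x = pd (lap f) k x := by
  have h : lap f = fun y => ∑ j, pd (pd f j) j y := rfl
  rw [h, pd_sum fun j =>
    smooth_differentiableAt hΩ (smooth_pd hΩ (smooth_pd hΩ hf j) j) hx]
  refine Finset.sum_congr rfl fun j _ => ?_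
  rw [pd2_eq_pd_pd, pd_congr hΩ (fun y hy => pd_comm hΩ hf k j hy) j hx,
    pd_comm hΩ (smooth_pd hΩ hf j) k j hx]

end PartialDerivatives

section MaximumPrinciple

/-- Second derivative test along a coordinate line. -/
theorem pd2_nonpos_of_isLocalMax {Ω : Set E3} {f : E3 → ℝ} {x : E3} (hΩ : IsOpen Ω)
    (hf : ContDiffOn ℝ ∞ f Ω) (hx : x ∈ Ω) (hmax : IsLocalMax f x) (j : Fin 3) :
    pd2 f j x ≤ 0 := by
  by_contra! hpos
  have hc : Continuous fun t : ℝ => x + t • ee j := by fun_prop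
  have hline : ∀ t : ℝ, HasDerivAt (fun t : ℝ => x + t • ee j) (ee j) t := fun t => by
    simpa using ((hasDerivAt_id t).smul_const (ee j)).const_add x
  have hev : ∀ᶠ t : ℝ in 𝓝 0, x + t • ee j ∈ Ω :=
    hc.continuousAt.eventually (by simpa using hΩ.mem_nhds hx)
  have hder : ∀ h : E3 → ℝ, ContDiffOn ℝ ∞ h Ω → ∀ t : ℝ, x + t • ee j ∈ Ω →
      HasDerivAt (fun t : ℝ => h (x + t • ee j)) (pd h j (x + t • ee j)) t := fun h hh t ht =>
    (smooth_differentiableAt hΩ hh ht).hasFDerivAt.comp_hasDerivAt t (hline t)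
  set g : ℝ → ℝ := fun t => f (x + t • ee j) with hg
  have hd1 : deriv g =ᶠ[𝓝 0] fun t => pd f j (x + t • ee j) :=
    hev.mono fun t ht => (hder f hf t ht).deriv
  have hd2 : deriv (deriv g) 0 = pd2 f j x := by
    rw [hd1.deriv_eq, (hder _ (smooth_pd hΩ hf j) 0 (by simpa using hx)).deriv]
    simp [pd2_eq_pd_pd]
  have hgmax : IsLocalMax g 0 := by
    have : Tendsto (fun t : ℝ => x + t • ee j) (𝓝 0) (𝓝 x) := by
      simpa using hc.tendsto 0
    simpa [IsLocalMax, IsMaxFilter, hg] using this.eventually hmax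
  have hgmin : IsLocalMin g 0 :=
    isLocalMin_of_deriv_deriv_pos (by rw [hd2]; exact hpos) hgmax.deriv_eq_zero
      (hder f hf 0 (by simpa using hx)).continuousAt
  have hconst : g =ᶠ[𝓝 0] fun _ => g 0 := by
    filter_upwards [hgmax, hgmin] with t h1 h2 using le_antisymm h1 h2
  have : deriv (deriv g) 0 = 0 := by
    rw [hconst.deriv.deriv_eq]
    simp
  linarith

theorem nonpos_of_lap_pos {Ω K I : Set E3} {w : E3 → ℝ} (hΩ : IsOpen Ω)
    (hw : ContDiffOn ℝ ∞ w Ω) (hK : IsCompact K) (hI : IsOpen I) (hIK : I ⊆ K) (hKΩ : K ⊆ Ω)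
    (hl : ∀ x ∈ I, 0 < lap w x) (hb : ∀ x ∈ K, x ∉ I → w x ≤ 0) : ∀ x ∈ K, w x ≤ 0 := by
  intro x hx
  obtain ⟨z, hz, hzmax⟩ := hK.exists_isMaxOn ⟨x, hx⟩ (hw.continuousOn.mono hKΩ)
  refine (hzmax hx).trans ?_
  by_cases hzI : z ∈ I
  · have hloc : IsLocalMax w z :=
      (hzmax.on_subset hIK).isLocalMax (hI.mem_nhds hzI)
    have : lap w z ≤ 0 := Finset.sum_nonpos fun j _ =>
      pd2_nonpos_of_isLocalMax hΩ hw (hKΩ hz) hloc j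
    exact absurd (hl z hzI) (not_lt.mpr this)
  · exact hb z hz hzI

end MaximumPrinciple

section GradientEstimate

/-- Quadratic barrier on the unit half ball `{‖x‖ ≤ 1, 0 ≤ x n}`. -/
def barrier (A B : ℝ) (n : Fin 3) (x : E3) : ℝ :=
  A * (∑ i, x i * x i) + ((3 * A + B) * x n - (3 * A + B) * (x n * x n))

theorem contDiff_barrier (A B : ℝ) (n : Fin 3) : ContDiff ℝ ∞ (barrier A B n) := by
  unfold barrier
  fun_prop

theorem pd_barrier (A B : ℝ) (n j : Fin 3) (x : E3) :
    pd (barrier A B n) j x =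
      2 * A * x j + if n = j then (3 * A + B) - 2 * (3 * A + B) * x n else 0 := by
  have hc : ∀ i : Fin 3, DifferentiableAt ℝ (fun y : E3 => y i) x := fun i => by fun_prop
  unfold barrier
  rw [pd_add (by fun_prop) (by fun_prop), pd_const_mul, pd_sum (fun i => by fun_prop),
    pd_sub (by fun_prop) (by fun_prop), pd_const_mul, pd_const_mul, pd_coord, pd_mul (hc n) (hc n),
    pd_coord]
  simp only [pd_mul (hc _) (hc _), pd_coord]
  by_cases h : n = j <;> simp [h, Finset.sum_add_distrib] <;> ring

theorem lap_barrier (A B : ℝ) (n : Fin 3) (x : E3) : lap (barrier A B n) x = -(2 * B) := by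
  have h2 : ∀ j, pd2 (barrier A B n) j x =
      2 * A - if n = j then 2 * (3 * A + B) else 0 := fun j => by
    rw [pd2_eq_pd_pd, funext (pd_barrier A B n j)]
    by_cases h : n = j
    · subst h
      simp only [if_true]
      rw [pd_add (by fun_prop) (by fun_prop), pd_sub (by fun_prop) (by fun_prop), pd_const_mul,
        pd_const_mul, pd_coord]
      simp [pd]
      ring
    · simp only [if_neg h, add_zero, sub_zero]
      rw [pd_const_mul, pd_coord]
      simp
  simp only [lap, h2, Finset.sum_sub_distrib, Finset.sum_const, Finset.sum_ite_eq]
  simp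
  ring

theorem norm_sq_eq_sum_mul (x : E3) : ‖x‖ ^ 2 = ∑ i, x i * x i := by
  rw [EuclideanSpace.norm_sq_eq]
  exact Finset.sum_congr rfl fun i _ => by rw [Real.norm_eq_abs, sq_abs, sq]

theorem abs_coord_le_norm (x : E3) (i : Fin 3) : |x i| ≤ ‖x‖ := by
  simpa using PiLp.norm_apply_le x i

theorem le_barrier {Ω : Set E3} {φ : E3 → ℝ} {A B : ℝ} {n : Fin 3} (hΩ : IsOpen Ω)
    (hφ : ContDiffOn ℝ ∞ φ Ω) (hsub : closedBall 0 1 ⊆ Ω) (hA0 : 0 ≤ A) (hB0 : 0 ≤ B)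
    (hA : ∀ x ∈ closedBall (0 : E3) 1, φ x ≤ A)
    (hB : ∀ x ∈ closedBall (0 : E3) 1, -(2 * B) < lap φ x)
    (h0 : ∀ x ∈ closedBall (0 : E3) 1, x n = 0 → φ x = 0) :
    ∀ x ∈ closedBall (0 : E3) 1, 0 ≤ x n → φ x ≤ barrier A B n x := by
  have hcn : Continuous fun x : E3 => x n := by fun_prop
  have hb : ∀ x : E3, barrier A B n x = A * ‖x‖ ^ 2 + (3 * A + B) * (x n * (1 - x n)) := fun x => by
    rw [barrier, norm_sq_eq_sum_mul]
    ring
  have key := nonpos_of_lap_pos (w := fun y => φ y - barrier A B n y)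
    (K := closedBall 0 1 ∩ {x | 0 ≤ x n}) (I := ball 0 1 ∩ {x | 0 < x n}) hΩ
    (hφ.sub (contDiff_barrier A B n).contDiffOn)
    ((isCompact_closedBall _ _).inter_right (isClosed_le continuous_const hcn))
    (isOpen_ball.inter (isOpen_lt continuous_const hcn))
    (Set.inter_subset_inter ball_subset_closedBall fun x (hx : 0 < x n) => hx.le)
    (Set.inter_subset_left.trans hsub) ?_ ?_
  · intro x hx hxn
    have := key x ⟨hx, hxn⟩
    linarith
  · rintro x ⟨hx, -⟩
    have hx' := ball_subset_closedBall hx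
    rw [lap_sub hΩ hφ (contDiff_barrier A B n).contDiffOn (hsub hx'), lap_barrier]
    linarith [hB x hx']
  · rintro x ⟨hx, hxn : 0 ≤ x n⟩ hxI
    rcases hxn.eq_or_lt with h | h
    · rw [h0 x hx h.symm, hb, ← h]
      have : 0 ≤ A * ‖x‖ ^ 2 := by positivity
      linarith
    · have hx1 : ‖x‖ ≤ 1 := by simpa using hx
      have hn1 : x n ≤ 1 := (le_abs_self _).trans ((abs_coord_le_norm x n).trans hx1)
      have h1 : ‖x‖ = 1 := hx1.eq_of_not_lt fun h' => hxI ⟨by simpa using h', h⟩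
      rw [hb, h1]
      have : 0 ≤ (3 * A + B) * (x n * (1 - x n)) :=
        mul_nonneg (by positivity) (mul_nonneg hxn (by linarith))
      linarith [hA x hx]

theorem exists_coord_reflection (n : Fin 3) : ∃ σ : E3 ≃ₗᵢ[ℝ] E3,
    (∀ j, σ (ee j) = if j = n then -ee j else ee j) ∧ ∀ x : E3, x n = 0 → σ x = x := by
  have hfix : ∀ x : E3, x n = 0 → ((ℝ ∙ ee n)ᗮ).reflection x = x := fun x hx => by
    refine Submodule.reflection_mem_subspace_eq_self ?_
    rw [Submodule.mem_orthogonal_singleton_iff_inner_right]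
    simp [ee, EuclideanSpace.inner_single_left, hx]
  refine ⟨((ℝ ∙ ee n)ᗮ).reflection, fun j => ?_, hfix⟩
  by_cases h : j = n
  · rw [if_pos h, h, Submodule.reflection_orthogonalComplement_singleton_eq_neg]
  · rw [if_neg h]
    exact hfix _ (by simp [ee, Ne.symm h])

theorem pd_comp_isometry (f : E3 → ℝ) (σ : E3 ≃ₗᵢ[ℝ] E3) (j : Fin 3) (x : E3) :
    pd (fun y => f (σ y)) j x = fderiv ℝ f (σ x) (σ (ee j)) := by
  have := σ.toContinuousLinearEquiv.comp_right_fderiv (f := f) (x := x)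
  have := congrArg (fun T => T (ee j)) this
  simpa [Function.comp_def, pd] using this

theorem lap_comp_reflection (f : E3 → ℝ) {σ : E3 ≃ₗᵢ[ℝ] E3} {n : Fin 3}
    (hσ : ∀ j, σ (ee j) = if j = n then -ee j else ee j) (x : E3) :
    lap (fun y => f (σ y)) x = lap f (σ x) := by
  refine Finset.sum_congr rfl fun j _ => ?_
  have h1 : ∀ (h : E3 → ℝ) (y : E3),
      pd (fun y => h (σ y)) j y = (if j = n then -1 else 1) * pd h j (σ y) := fun h y => by
    rw [pd_comp_isometry, hσ]
    split_ifs <;> simp [pd]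
  rw [pd2_eq_pd_pd, funext (h1 f), pd_const_mul, h1, pd2_eq_pd_pd, ← mul_assoc]
  split_ifs <;> simp

theorem pd_zero_le {Ω : Set E3} {f : E3 → ℝ} {A B : ℝ} (n : Fin 3) (hΩ : IsOpen Ω)
    (hf : ContDiffOn ℝ ∞ f Ω) (hsub : closedBall 0 1 ⊆ Ω)
    (hA : ∀ x ∈ closedBall (0 : E3) 1, |f x| ≤ A)
    (hB : ∀ x ∈ closedBall (0 : E3) 1, |lap f x| < 2 * B) : pd f n 0 ≤ 3 * A + B := by
  obtain ⟨σ, hσ, hfix⟩ := exists_coord_reflection n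
  have h0mem : (0 : E3) ∈ closedBall (0 : E3) 1 := by simp
  have hA0 : 0 ≤ A := (abs_nonneg _).trans (hA 0 h0mem)
  have hB0 : 0 ≤ B := by linarith [(abs_nonneg _).trans_lt (hB 0 h0mem)]
  have hσb : ∀ x ∈ closedBall (0 : E3) 1, σ x ∈ closedBall (0 : E3) 1 := fun x hx => by
    simpa using hx
  have hΩ' : IsOpen (Ω ∩ σ ⁻¹' Ω) := hΩ.inter (hΩ.preimage σ.continuous)
  have hf1 : ContDiffOn ℝ ∞ f (Ω ∩ σ ⁻¹' Ω) := hf.mono Set.inter_subset_left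
  have hf2 : ContDiffOn ℝ ∞ (fun y => f (σ y)) (Ω ∩ σ ⁻¹' Ω) :=
    hf.comp σ.contDiff.contDiffOn fun x hx => hx.2
  have hsub' : closedBall 0 1 ⊆ Ω ∩ σ ⁻¹' Ω := fun x hx => ⟨hsub hx, hsub (hσb x hx)⟩
  have key := le_barrier (φ := fun y => 1 / 2 * (f y - f (σ y))) (A := A) (B := B) (n := n) hΩ'
    (contDiffOn_const.mul (hf1.sub hf2)) hsub' hA0 hB0
    (fun x hx => by
      have := abs_le.mp (hA x hx)
      have := abs_le.mp (hA _ (hσb x hx))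
      linarith)
    (fun x hx => by
      rw [lap_const_mul, lap_sub hΩ' hf1 hf2 (hsub' hx), lap_comp_reflection f hσ]
      have := abs_lt.mp (hB x hx)
      have := abs_lt.mp (hB _ (hσb x hx))
      linarith)
    (fun x hx hxn => by rw [hfix x hxn]; ring)
  have hσt : ∀ t : ℝ, σ (t • ee n) = -t • ee n := fun t => by
    rw [map_smul, hσ, if_pos rfl, smul_neg, neg_smul]
  have hline : ∀ c : ℝ, HasDerivAt (fun t : ℝ => (c * t) • ee n) (c • ee n) 0 := fun c => by
    simpa using ((hasDerivAt_id (0 : ℝ)).const_mul c).smul_const (ee n)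
  have hfd : ∀ c : ℝ, HasDerivAt (fun t : ℝ => f ((c * t) • ee n)) (c * pd f n 0) 0 := fun c => by
    have h := (smooth_differentiableAt hΩ hf (hsub h0mem)).hasFDerivAt
    have h' : HasFDerivAt f (fderiv ℝ f 0) ((c * (0 : ℝ)) • ee n) := by simpa using h
    simpa [pd, Function.comp_def] using h'.comp_hasDerivAt (0 : ℝ) (hline c)
  have hg : HasDerivAt (fun t : ℝ => f ((1 * t) • ee n) - f ((-1 * t) • ee n))
      (1 * pd f n 0 - -1 * pd f n 0) 0 := (hfd 1).sub (hfd (-1))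
  have hlim := hg.tendsto_slope_zero_right
  have : 1 * pd f n 0 - -1 * pd f n 0 ≤ 2 * (3 * A + B) := by
    refine le_of_tendsto hlim ?_
    filter_upwards [Ioc_mem_nhdsGT (zero_lt_one' ℝ)] with t ht
    have hen : (t • ee n : E3) n = t := by simp [ee]
    have hnorm : ‖(t • ee n : E3)‖ = t := by
      simp [ee, norm_smul, abs_of_pos ht.1]
    have h := key (t • ee n) (by simpa [hnorm] using ht.2) (by rw [hen]; exact ht.1.le)
    simp only [hσt, barrier, ← norm_sq_eq_sum_mul, hnorm, hen] at h
    simp only [zero_add, mul_zero, zero_smul, sub_self, sub_zero, one_mul, neg_one_mul,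
      smul_eq_mul]
    rw [inv_mul_le_iff₀ ht.1]
    nlinarith [sq_nonneg t, mul_nonneg hA0 (sq_nonneg t), mul_nonneg hB0 (sq_nonneg t)]
  linarith

/-- Interior gradient estimate for the Poisson equation in the sup norm. -/
theorem abs_pd_le {Ω : Set E3} {f : E3 → ℝ} {A N r : ℝ} {x₀ : E3} (n : Fin 3) (hΩ : IsOpen Ω)
    (hf : ContDiffOn ℝ ∞ f Ω) (hr : 0 < r) (hsub : closedBall x₀ r ⊆ Ω)
    (hA : ∀ x ∈ closedBall x₀ r, |f x| ≤ A) (hN : ∀ x ∈ closedBall x₀ r, |lap f x| ≤ N) :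
    |pd f n x₀| ≤ 3 * A / r + r * N / 2 := by
  have hmaps : ∀ y ∈ closedBall (0 : E3) 1, x₀ + r • y ∈ closedBall x₀ r := fun y hy => by
    have : ‖y‖ ≤ 1 := by simpa using hy
    simpa [norm_smul, abs_of_pos hr] using mul_le_of_le_one_right hr.le this
  have main : ∀ s : ℝ, |s| = 1 → s * (r * pd f n x₀) ≤ 3 * A + r ^ 2 * N / 2 := fun s hs => by
    refine le_of_forall_pos_le_add fun ε hε => ?_
    have h := pd_zero_le (f := fun y => s * f (x₀ + r • y)) (A := A) (B := r ^ 2 * N / 2 + ε) n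
      (hΩ.preimage (f := fun y : E3 => x₀ + r • y) (by fun_prop))
      (contDiffOn_const.mul (smooth_affine hf x₀ r)) (fun y hy => hsub (hmaps y hy))
      (fun y hy => by rw [abs_mul, hs, one_mul]; exact hA _ (hmaps y hy))
      (fun y hy => by
        rw [lap_const_mul, lap_affine, abs_mul, abs_mul, hs, one_mul, abs_of_nonneg (sq_nonneg r)]
        have := mul_le_mul_of_nonneg_left (hN _ (hmaps y hy)) (sq_nonneg r)
        linarith)
    rw [pd_const_mul, pd_affine] at h
    simp only [smul_zero, add_zero] at h
    linarith
  have h1 := main 1 (by simp)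
  have h2 := main (-1) (by simp)
  have h3 : r * |pd f n x₀| ≤ 3 * A + r ^ 2 * N / 2 := by
    rw [← abs_of_pos hr, ← abs_mul, abs_of_pos hr, abs_le]
    constructor <;> linarith
  have h4 : 3 * A / r + r * N / 2 = (3 * A + r ^ 2 * N / 2) / r := by
    field_simp
  rw [h4, le_div_iff₀ hr]
  linarith

end GradientEstimate

section WeightedMaximum

variable {x₀ : E3} {ρ : ℝ}

theorem exists_weighted_max {h : E3 → ℝ} (hρ : 0 < ρ) (k : ℕ)
    (hc : ContinuousOn h (closedBall x₀ ρ)) (h0 : ∀ x, 0 ≤ h x) (hk : k ≠ 0) :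
    ∃ H : ℝ, 0 ≤ H ∧ (∀ y ∈ closedBall x₀ ρ, (ρ - dist y x₀) ^ k * h y ≤ H) ∧
      (H = 0 ∨ ∃ x, 0 < ρ - dist x x₀ ∧ H = (ρ - dist x x₀) ^ k * h x) := by
  obtain ⟨x, hx, hmax⟩ := (isCompact_closedBall x₀ ρ).exists_isMaxOn
    ⟨x₀, mem_closedBall_self hρ.le⟩
    (f := fun y => (ρ - dist y x₀) ^ k * h y)
    (ContinuousOn.mul (by fun_prop) hc)
  have hd : 0 ≤ ρ - dist x x₀ := sub_nonneg.mpr hx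
  refine ⟨_, mul_nonneg (pow_nonneg hd k) (h0 x), fun y hy => hmax hy, ?_⟩
  rcases hd.eq_or_lt with h | h
  · left
    rw [← h, zero_pow hk, zero_mul]
  · exact Or.inr ⟨x, h, rfl⟩

theorem mem_and_half_le_of_mem_closedBall {x y : E3} {θ : ℝ} (hd : 0 < ρ - dist x x₀)
    (hθ : θ ≤ 1 / 2) (hy : y ∈ closedBall x (θ * (ρ - dist x x₀))) :
    y ∈ closedBall x₀ ρ ∧ (ρ - dist x x₀) / 2 ≤ ρ - dist y x₀ := by
  have h1 : dist y x ≤ θ * (ρ - dist x x₀) := hy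
  have h2 := dist_triangle y x x₀
  have h3 : θ * (ρ - dist x x₀) ≤ 1 / 2 * (ρ - dist x x₀) :=
    mul_le_mul_of_nonneg_right hθ hd.le
  constructor
  · rw [mem_closedBall]
    linarith
  · linarith

theorem le_of_weighted_le {d w h H : ℝ} {k : ℕ} (hd : 0 < d) (hw : d / 2 ≤ w)
    (h0 : 0 ≤ h) (hH : w ^ k * h ≤ H) : h ≤ 2 ^ k * H / d ^ k := by
  have h1 : (d / 2) ^ k * h ≤ H :=
    (mul_le_mul_of_nonneg_right (pow_le_pow_left₀ (by positivity) hw k) h0).trans hH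
  rw [div_pow] at h1
  rw [le_div_iff₀ (by positivity)]
  calc h * d ^ k = 2 ^ k * (d ^ k / 2 ^ k * h) := by field_simp
    _ ≤ 2 ^ k * H := by gcongr

end WeightedMaximum

section SemilinearSystem

/-- Systems `Δ Uₐ = ∑ L ∂U + ∑ B U ∂U` with constant coefficients. -/
def IsSys {ι : Type} [Fintype ι] (L : ι → ι → Fin 3 → ℝ) (B : ι → ι → ι → Fin 3 → ℝ)
    (U : ι → E3 → ℝ) (Ω : Set E3) : Prop :=
  ∀ x ∈ Ω, ∀ a, lap (U a) x = ∑ b, ∑ j, L a b j * pd (U b) j x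
    + ∑ b, ∑ c, ∑ j, B a b c j * (U b x * pd (U c) j x)

/-- Sum of the absolute values of all first partial derivatives of a finite family. -/
def gradSum {ι : Type} [Fintype ι] (U : ι → E3 → ℝ) (x : E3) : ℝ := ∑ a, ∑ j, |pd (U a) j x|

variable {ι : Type} [Fintype ι] {L : ι → ι → Fin 3 → ℝ} {B : ι → ι → ι → Fin 3 → ℝ}
  {U : ι → E3 → ℝ} {Ω : Set E3}

theorem gradSum_nonneg (U : ι → E3 → ℝ) (x : E3) : 0 ≤ gradSum U x :=
  Finset.sum_nonneg fun _ _ => Finset.sum_nonneg fun _ _ => abs_nonneg _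

theorem abs_pd_le_gradSum (U : ι → E3 → ℝ) (a : ι) (j : Fin 3) (x : E3) :
    |pd (U a) j x| ≤ gradSum U x :=
  (Finset.single_le_sum (f := fun j => |pd (U a) j x|) (fun _ _ => abs_nonneg _)
    (Finset.mem_univ j)).trans
  (Finset.single_le_sum (f := fun a => ∑ j, |pd (U a) j x|)
    (fun _ _ => Finset.sum_nonneg fun _ _ => abs_nonneg _) (Finset.mem_univ a))

theorem gradSum_le {x : E3} {c : ℝ} (h : ∀ a j, |pd (U a) j x| ≤ c) :
    gradSum U x ≤ 3 * Fintype.card ι * c := by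
  calc gradSum U x ≤ ∑ _a : ι, ∑ _j : Fin 3, c :=
        Finset.sum_le_sum fun a _ => Finset.sum_le_sum fun j _ => h a j
    _ = 3 * Fintype.card ι * c := by
        simp
        ring

theorem continuousOn_gradSum (hΩ : IsOpen Ω) (hU : ∀ a, ContDiffOn ℝ ∞ (U a) Ω) :
    ContinuousOn (gradSum U) Ω :=
  continuousOn_finsetSum _ fun a _ => continuousOn_finsetSum _ fun j _ =>
    (smooth_pd hΩ (hU a) j).continuousOn.abs

theorem IsSys.abs_lap_le (h : IsSys L B U Ω) {x : E3} (hx : x ∈ Ω) {κ M : ℝ} (hκM : κ ≤ M)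
    (hκ : ∀ a, |U a x| ≤ κ) (a : ι) :
    |lap (U a) x| ≤
      ((∑ a, ∑ b, ∑ j, |L a b j|) + M * ∑ a, ∑ b, ∑ c, ∑ j, |B a b c j|) * gradSum U x := by
  have hκ0 : 0 ≤ κ := (abs_nonneg _).trans (hκ a)
  have hM0 : 0 ≤ M := hκ0.trans hκM
  have hG := gradSum_nonneg U x
  rw [h x hx a, add_mul]
  refine (abs_add_le _ _).trans (add_le_add ?_ ?_)
  · calc |∑ b, ∑ j, L a b j * pd (U b) j x| ≤ ∑ b, ∑ j, |L a b j| * gradSum U x := by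
          refine (Finset.abs_sum_le_sum_abs _ _).trans (Finset.sum_le_sum fun b _ => ?_)
          refine (Finset.abs_sum_le_sum_abs _ _).trans (Finset.sum_le_sum fun j _ => ?_)
          rw [abs_mul]
          exact mul_le_mul_of_nonneg_left (abs_pd_le_gradSum U b j x) (abs_nonneg _)
      _ = (∑ b, ∑ j, |L a b j|) * gradSum U x := by simp only [Finset.sum_mul]
      _ ≤ _ := by
          refine mul_le_mul_of_nonneg_right ?_ hG
          exact Finset.single_le_sum (f := fun a => ∑ b, ∑ j, |L a b j|)
            (fun _ _ => by positivity) (Finset.mem_univ a)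
  · calc |∑ b, ∑ c, ∑ j, B a b c j * (U b x * pd (U c) j x)|
        ≤ ∑ b, ∑ c, ∑ j, |B a b c j| * (M * gradSum U x) := by
          refine (Finset.abs_sum_le_sum_abs _ _).trans (Finset.sum_le_sum fun b _ => ?_)
          refine (Finset.abs_sum_le_sum_abs _ _).trans (Finset.sum_le_sum fun c _ => ?_)
          refine (Finset.abs_sum_le_sum_abs _ _).trans (Finset.sum_le_sum fun j _ => ?_)
          rw [abs_mul, abs_mul]
          exact mul_le_mul_of_nonneg_left (mul_le_mul ((hκ b).trans hκM)
            (abs_pd_le_gradSum U c j x) (abs_nonneg _) hM0) (abs_nonneg _)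
      _ = (∑ b, ∑ c, ∑ j, |B a b c j|) * (M * gradSum U x) := by simp only [Finset.sum_mul]
      _ ≤ (∑ a, ∑ b, ∑ c, ∑ j, |B a b c j|) * (M * gradSum U x) := by
          refine mul_le_mul_of_nonneg_right ?_ (by positivity)
          exact Finset.single_le_sum (f := fun a => ∑ b, ∑ c, ∑ j, |B a b c j|)
            (fun _ _ => by positivity) (Finset.mem_univ a)
      _ = _ := by ring

/-- Interior gradient bound for bounded solutions of a semilinear system. -/
theorem exists_gradient_bound (L : ι → ι → Fin 3 → ℝ) (B : ι → ι → ι → Fin 3 → ℝ) {M ρ : ℝ}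
    (hM : 0 ≤ M) (hρ : 0 < ρ) :
    ∃ C : ℝ, 0 ≤ C ∧ ∀ (Ω : Set E3) (U : ι → E3 → ℝ) (x₀ : E3) (κ : ℝ), IsOpen Ω →
      (∀ a, ContDiffOn ℝ ∞ (U a) Ω) → IsSys L B U Ω → closedBall x₀ ρ ⊆ Ω → κ ≤ M →
      (∀ x ∈ closedBall x₀ ρ, ∀ a, |U a x| ≤ κ) →
      ∀ x ∈ closedBall x₀ (ρ / 2), ∀ a j, |pd (U a) j x| ≤ C * κ := by
  set Λ : ℝ := (∑ a, ∑ b, ∑ j, |L a b j|) + M * ∑ a, ∑ b, ∑ c, ∑ j, |B a b c j| with hΛ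
  have hΛ0 : 0 ≤ Λ := by positivity
  set m : ℝ := 3 * Fintype.card ι with hm
  have hm0 : 0 ≤ m := by positivity
  set θ : ℝ := 1 / (2 + 2 * (m * ρ * Λ)) with hθ
  have hθ0 : 0 < θ := by positivity
  have hθ1 : θ ≤ 1 / 2 := by
    rw [hθ]
    refine one_div_le_one_div_of_le (by norm_num) ?_
    have : 0 ≤ m * ρ * Λ := by positivity
    linarith
  have hθ2 : m * (θ * ρ * Λ) ≤ 1 / 2 := by
    rw [hθ]
    have : 0 ≤ m * ρ * Λ := by positivity
    rw [show m * (1 / (2 + 2 * (m * ρ * Λ)) * ρ * Λ) = m * ρ * Λ / (2 + 2 * (m * ρ * Λ)) by ring,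
      div_le_iff₀ (by positivity)]
    linarith
  refine ⟨2 * (6 * m / θ) / ρ, by positivity, ?_⟩
  intro Ω U x₀ κ hΩ hU hsys hsub hκM hκ x hx a j
  have hκ0 : 0 ≤ κ := (abs_nonneg _).trans (hκ x₀ (mem_closedBall_self hρ.le) a)
  obtain ⟨H, hH0, hH, hHmax⟩ := exists_weighted_max hρ 1
    ((continuousOn_gradSum hΩ hU).mono hsub) (gradSum_nonneg U) one_ne_zero
  have hHle : H ≤ 6 * m / θ * κ := by
    rcases hHmax with h | ⟨z, hz, hHz⟩
    · rw [h]
      positivity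
    set d := ρ - dist z x₀ with hd
    have hdρ : d ≤ ρ := by linarith [dist_nonneg (x := z) (y := x₀)]
    have hnear := fun y hy => mem_and_half_le_of_mem_closedBall (y := y) hz hθ1 hy
    have hpd : ∀ a j, |pd (U a) j z| ≤ (3 * κ / θ + θ * ρ * Λ * H) / d := fun a j => by
      have h := abs_pd_le (A := κ) (N := Λ * (2 ^ 1 * H / d ^ 1)) j hΩ (hU a) (mul_pos hθ0 hz)
        (fun y hy => hsub (hnear y hy).1) (fun y hy => hκ y (hnear y hy).1 a)
        (fun y hy => (hsys.abs_lap_le (hsub (hnear y hy).1) hκM (hκ y (hnear y hy).1) a).trans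
          (mul_le_mul_of_nonneg_left (le_of_weighted_le hz (hnear y hy).2 (gradSum_nonneg U y)
            (hH y (hnear y hy).1)) hΛ0))
      refine h.trans ?_
      have e : 3 * κ / (θ * d) + θ * d * (Λ * (2 ^ 1 * H / d ^ 1)) / 2
          = (3 * κ / θ + θ * d * Λ * H) / d := by
        field_simp
      rw [e]
      gcongr
    have hsum := gradSum_le hpd
    have h1 : H ≤ m * (3 * κ / θ + θ * ρ * Λ * H) := by
      calc H = d * gradSum U z := by rw [hHz, pow_one]
        _ ≤ d * (m * ((3 * κ / θ + θ * ρ * Λ * H) / d)) := by gcongr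
        _ = m * (3 * κ / θ + θ * ρ * Λ * H) := by field_simp
    have h2 : m * (θ * ρ * Λ) * H ≤ 1 / 2 * H := mul_le_mul_of_nonneg_right hθ2 hH0
    have h3 : 6 * m / θ * κ = 2 * (m * (3 * κ / θ)) := by ring
    rw [h3]
    linarith
  have hxd : dist x x₀ ≤ ρ / 2 := hx
  have h := le_of_weighted_le hρ (by linarith) (gradSum_nonneg U x)
    (hH x (closedBall_subset_closedBall (by linarith) hx))
  calc |pd (U a) j x| ≤ 2 ^ 1 * H / ρ ^ 1 := (abs_pd_le_gradSum U a j x).trans h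
    _ ≤ 2 ^ 1 * (6 * m / θ * κ) / ρ ^ 1 := by gcongr
    _ = 2 * (6 * m / θ) / ρ * κ := by ring

/-- A family together with all its first partial derivatives. -/
def extFam (U : ι → E3 → ℝ) : ι ⊕ Fin 3 × ι → E3 → ℝ
  | .inl a => U a
  | .inr (k, a) => pd (U a) k

/-- Linear coefficients of the system satisfied by `extFam U`. -/
def extLin (L : ι → ι → Fin 3 → ℝ) : ι ⊕ Fin 3 × ι → ι ⊕ Fin 3 × ι → Fin 3 → ℝ
  | .inl a, .inl b, j => L a b j
  | .inr (k, a), .inr (l, b), j => if l = k then L a b j else 0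
  | _, _, _ => 0

/-- Bilinear coefficients of the system satisfied by `extFam U`. -/
def extBil (B : ι → ι → ι → Fin 3 → ℝ) :
    ι ⊕ Fin 3 × ι → ι ⊕ Fin 3 × ι → ι ⊕ Fin 3 × ι → Fin 3 → ℝ
  | .inl a, .inl b, .inl c, j => B a b c j
  | .inr (k, a), .inr (l, b), .inl c, j => if l = k then B a b c j else 0
  | .inr (k, a), .inl b, .inr (l, c), j => if l = k then B a b c j else 0
  | _, _, _, _ => 0

theorem smooth_extFam {ι : Type} {U : ι → E3 → ℝ} (hΩ : IsOpen Ω)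
    (hU : ∀ a, ContDiffOn ℝ ∞ (U a) Ω) :
    ∀ a, ContDiffOn ℝ ∞ (extFam U a) Ω
  | .inl a => hU a
  | .inr (k, a) => smooth_pd hΩ (hU a) k

theorem IsSys.ext (hΩ : IsOpen Ω) (hU : ∀ a, ContDiffOn ℝ ∞ (U a) Ω) (h : IsSys L B U Ω) :
    IsSys (extLin L) (extBil B) (extFam U) Ω := by
  rintro x hx (a | ⟨k, a⟩)
  · simp [extFam, extLin, extBil, Fintype.sum_sum_type, h x hx a]
  · have hd : ∀ b, DifferentiableAt ℝ (U b) x := fun b => smooth_differentiableAt hΩ (hU b) hx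
    have hd' : ∀ b j, DifferentiableAt ℝ (pd (U b) j) x := fun b j =>
      smooth_differentiableAt hΩ (smooth_pd hΩ (hU b) j) hx
    have hpm : ∀ b c j, pd (fun y => U b y * pd (U c) j y) k x =
        pd (U b) k x * pd (U c) j x + U b x * pd (pd (U c) k) j x := fun b c j => by
      rw [pd_mul (hd b) (hd' c j), pd_comm hΩ (hU c) j k hx]
    have lhs : lap (pd (U a) k) x = ∑ b, ∑ j, L a b j * pd (pd (U b) k) j x
        + ∑ b, ∑ c, ∑ j, B a b c j *
          (pd (U b) k x * pd (U c) j x + U b x * pd (pd (U c) k) j x) := by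
      rw [lap_pd hΩ (hU a) k hx, pd_congr hΩ (fun y hy => h y hy a) k hx,
        pd_add (by fun_prop) (by fun_prop), pd_sum (fun b => by fun_prop),
        pd_sum (fun b => by fun_prop)]
      congr 1
      · refine Finset.sum_congr rfl fun b _ => ?_
        rw [pd_sum (fun j => by fun_prop)]
        refine Finset.sum_congr rfl fun j _ => ?_
        rw [pd_const_mul, pd_comm hΩ (hU b) j k hx]
      · refine Finset.sum_congr rfl fun b _ => ?_
        rw [pd_sum (fun j => by fun_prop)]
        refine Finset.sum_congr rfl fun c _ => ?_
        rw [pd_sum (fun j => by fun_prop)]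
        refine Finset.sum_congr rfl fun j _ => ?_
        rw [pd_const_mul, hpm]
    have e1 : ∀ F : Fin 3 → ι → Fin 3 → ℝ,
        ∑ l, ∑ b, ∑ j, (if l = k then L a b j else 0) * F l b j = ∑ b, ∑ j, L a b j * F k b j :=
      fun F => by
        rw [Finset.sum_eq_single k (fun l _ hl => by simp [hl]) (by simp)]
        simp
    have e2 : ∀ F : Fin 3 → ι → ι → Fin 3 → ℝ,
        ∑ l, ∑ b, ∑ c, ∑ j, (if l = k then B a b c j else 0) * F l b c j =
          ∑ b, ∑ c, ∑ j, B a b c j * F k b c j := fun F => by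
        rw [Finset.sum_eq_single k (fun l _ hl => by simp [hl]) (by simp)]
        simp
    have e3 : ∀ F : ι → Fin 3 → ι → Fin 3 → ℝ,
        ∑ b, ∑ l, ∑ c, ∑ j, (if l = k then B a b c j else 0) * F b l c j =
          ∑ b, ∑ c, ∑ j, B a b c j * F b k c j := fun F => by
        refine Finset.sum_congr rfl fun b _ => ?_
        rw [Finset.sum_eq_single k (fun l _ hl => by simp [hl]) (by simp)]
        simp
    simp only [extFam, extLin, extBil, Fintype.sum_sum_type, Fintype.sum_prod_type, zero_mul,
      Finset.sum_const_zero, add_zero, zero_add]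
    rw [lhs, e1 fun l b j => pd (pd (U b) l) j x,
      e2 fun l b c j => pd (U b) l x * pd (U c) j x,
      e3 fun b l c j => U b x * pd (pd (U c) l) j x]
    simp only [mul_add, Finset.sum_add_distrib]
    ring

/-- Iterated partial derivative along a word of coordinate directions. -/
def pdw : List (Fin 3) → (E3 → ℝ) → E3 → ℝ
  | [], f => f
  | j :: w, f => pdw w (pd f j)

/-- Interior bounds of all orders for bounded solutions of a semilinear system. -/
theorem exists_pdw_bound (w : List (Fin 3)) : ∀ {ι : Type} [Fintype ι] (L : ι → ι → Fin 3 → ℝ)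
    (B : ι → ι → ι → Fin 3 → ℝ) {M ρ : ℝ}, 0 ≤ M → 0 < ρ →
    ∃ C : ℝ, 0 ≤ C ∧ ∀ (Ω : Set E3) (U : ι → E3 → ℝ) (x₀ : E3) (κ : ℝ), IsOpen Ω →
      (∀ a, ContDiffOn ℝ ∞ (U a) Ω) → IsSys L B U Ω → closedBall x₀ ρ ⊆ Ω → κ ≤ M →
      (∀ x ∈ closedBall x₀ ρ, ∀ a, |U a x| ≤ κ) → ∀ a, |pdw w (U a) x₀| ≤ C * κ := by
  induction w with
  | nil =>
    intro ι _ L B M ρ _ hρ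
    refine ⟨1, zero_le_one, fun Ω U x₀ κ _ _ _ _ _ hκ a => ?_⟩
    simpa [pdw] using hκ x₀ (mem_closedBall_self hρ.le) a
  | cons j w ih =>
    intro ι _ L B M ρ hM hρ
    obtain ⟨C₁, hC₁, h₁⟩ := exists_gradient_bound L B hM hρ
    obtain ⟨C₂, hC₂, h₂⟩ := ih (extLin L) (extBil B) (M := (1 + C₁) * M) (by positivity)
      (half_pos hρ)
    refine ⟨C₂ * (1 + C₁), by positivity, ?_⟩
    intro Ω U x₀ κ hΩ hU hsys hsub hκM hκ a
    have hκ0 : 0 ≤ κ := (abs_nonneg _).trans (hκ x₀ (mem_closedBall_self hρ.le) a)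
    have hhalf : closedBall x₀ (ρ / 2) ⊆ closedBall x₀ ρ :=
      closedBall_subset_closedBall (by linarith)
    have h := h₂ Ω (extFam U) x₀ ((1 + C₁) * κ) hΩ (smooth_extFam hΩ hU) (hsys.ext hΩ hU)
      (hhalf.trans hsub) (by gcongr) ?_ (.inr (j, a))
    · simpa [pdw, extFam, mul_assoc] using h
    · rintro x hx (b | ⟨l, b⟩)
      · refine (hκ x (hhalf hx) b).trans ?_
        nlinarith [mul_nonneg hC₁ hκ0]
      · refine (h₁ Ω U x₀ κ hΩ hU hsys hsub hκM hκ x hx b l).trans ?_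
        nlinarith

end SemilinearSystem

section FirstDerivatives

/-- Steady Navier–Stokes system for scalar velocity components. -/
structure IsNSComp (v : Fin 3 → E3 → ℝ) (p : E3 → ℝ) (Ω : Set E3) : Prop where
  isOpen : IsOpen Ω
  smooth_v : ∀ i, ContDiffOn ℝ ∞ (v i) Ω
  smooth_p : ContDiffOn ℝ ∞ p Ω
  momentum : ∀ x ∈ Ω, ∀ i, lap (v i) x = ∑ l, v l x * pd (v i) l x + pd p i x
  div_free : ∀ x ∈ Ω, ∑ j, pd (v j) j x = 0

/-- Vorticity as an antisymmetric matrix field. -/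
def vort (v : Fin 3 → E3 → ℝ) (a : Fin 3 × Fin 3) (x : E3) : ℝ :=
  pd (v a.2) a.1 x - pd (v a.1) a.2 x

namespace IsNSComp

variable {v : Fin 3 → E3 → ℝ} {p : E3 → ℝ} {Ω : Set E3} {x : E3}

theorem smooth_vort (h : IsNSComp v p Ω) (a : Fin 3 × Fin 3) : ContDiffOn ℝ ∞ (vort v a) Ω :=
  (smooth_pd h.isOpen (h.smooth_v _) _).sub (smooth_pd h.isOpen (h.smooth_v _) _)

theorem differentiableAt_v (h : IsNSComp v p Ω) (hx : x ∈ Ω) (i : Fin 3) :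
    DifferentiableAt ℝ (v i) x :=
  smooth_differentiableAt h.isOpen (h.smooth_v i) hx

theorem differentiableAt_pd_v (h : IsNSComp v p Ω) (hx : x ∈ Ω) (i j : Fin 3) :
    DifferentiableAt ℝ (pd (v i) j) x :=
  smooth_differentiableAt h.isOpen (smooth_pd h.isOpen (h.smooth_v i) j) hx

theorem differentiableAt_pd_p (h : IsNSComp v p Ω) (hx : x ∈ Ω) (j : Fin 3) :
    DifferentiableAt ℝ (pd p j) x :=
  smooth_differentiableAt h.isOpen (smooth_pd h.isOpen h.smooth_p j) hx

theorem sum_pd_pd_v (h : IsNSComp v p Ω) (hx : x ∈ Ω) (l : Fin 3) :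
    ∑ i, pd (pd (v i) l) i x = 0 := by
  have hdiv : pd (fun y => ∑ i, pd (v i) i y) l x = 0 := by
    rw [pd_congr h.isOpen (g := fun _ => 0) (fun y hy => h.div_free y hy) l hx]
    simp [pd]
  rw [pd_sum fun i => h.differentiableAt_pd_v hx i i] at hdiv
  rw [← hdiv]
  exact Finset.sum_congr rfl fun i _ => pd_comm h.isOpen (h.smooth_v i) l i hx

theorem lap_v (h : IsNSComp v p Ω) (hx : x ∈ Ω) (j : Fin 3) :
    lap (v j) x = ∑ i, pd (vort v (i, j)) i x := by
  have e : ∀ i, pd (vort v (i, j)) i x = pd (pd (v j) i) i x - pd (pd (v i) j) i x := fun i =>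
    pd_sub (h.differentiableAt_pd_v hx j i) (h.differentiableAt_pd_v hx i j) i
  simp only [e, Finset.sum_sub_distrib, h.sum_pd_pd_v hx j, sub_zero]
  rfl

theorem lap_pd_v (h : IsNSComp v p Ω) (hx : x ∈ Ω) (i j : Fin 3) :
    lap (pd (v j) i) x =
      ∑ l, (pd (v l) i x * pd (v j) l x + v l x * pd (pd (v j) i) l x) + pd (pd p j) i x := by
  have h1 := h.differentiableAt_v hx
  have h2 := h.differentiableAt_pd_v hx
  have h3 := h.differentiableAt_pd_p hx
  rw [lap_pd h.isOpen (h.smooth_v j) i hx, pd_congr h.isOpen (fun y hy => h.momentum y hy j) i hx,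
    pd_add (by fun_prop) (h3 j), pd_sum (fun l => by fun_prop)]
  congr 1
  refine Finset.sum_congr rfl fun l _ => ?_
  rw [pd_mul (h1 l) (h2 j l), pd_comm h.isOpen (h.smooth_v j) l i hx]

theorem lap_vort (h : IsNSComp v p Ω) (hx : x ∈ Ω) (i j : Fin 3) :
    lap (vort v (i, j)) x =
      ∑ l, (pd (v l) i x * pd (v j) l x - pd (v l) j x * pd (v i) l x
        + v l x * pd (vort v (i, j)) l x) := by
  have e : ∀ l, pd (vort v (i, j)) l x = pd (pd (v j) i) l x - pd (pd (v i) j) l x := fun l =>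
    pd_sub (h.differentiableAt_pd_v hx j i) (h.differentiableAt_pd_v hx i j) l
  have e' : lap (vort v (i, j)) x = lap (pd (v j) i) x - lap (pd (v i) j) x :=
    lap_sub h.isOpen (smooth_pd h.isOpen (h.smooth_v j) i) (smooth_pd h.isOpen (h.smooth_v i) j) hx
  rw [e', h.lap_pd_v hx, h.lap_pd_v hx, pd_comm h.isOpen h.smooth_p i j hx,
    add_sub_add_right_eq_sub, ← Finset.sum_sub_distrib]
  refine Finset.sum_congr rfl fun l _ => ?_
  rw [e]
  ring

theorem lap_p (h : IsNSComp v p Ω) (hx : x ∈ Ω) :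
    lap p x = -∑ i, ∑ l, pd (v l) i x * pd (v i) l x := by
  have h1 : ∑ i, lap (pd (v i) i) x = 0 := by
    have e : ∀ i, lap (pd (v i) i) x = ∑ j, pd (pd (pd (v i) i) j) j x := fun i => rfl
    simp only [e]
    rw [Finset.sum_comm]
    refine Finset.sum_eq_zero fun j _ => ?_
    have hz := pd_congr h.isOpen (g := fun _ => 0) (fun y hy => h.sum_pd_pd_v hy j) j hx
    rw [pd_sum fun i => smooth_differentiableAt h.isOpen
      (smooth_pd h.isOpen (smooth_pd h.isOpen (h.smooth_v i) j) i) hx] at hz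
    simp only [pd, fderiv_fun_const, Pi.zero_apply, zero_apply] at hz
    refine Eq.trans (Finset.sum_congr rfl fun i _ => ?_) hz
    exact pd_congr h.isOpen (fun y hy => pd_comm h.isOpen (h.smooth_v i) i j hy) j hx
  have h2 : ∑ i, ∑ l, v l x * pd (pd (v i) i) l x = 0 := by
    rw [Finset.sum_comm]
    refine Finset.sum_eq_zero fun l _ => ?_
    rw [← Finset.mul_sum]
    have : ∑ i, pd (pd (v i) i) l x = 0 := by
      rw [← h.sum_pd_pd_v hx l]
      exact Finset.sum_congr rfl fun i _ => pd_comm h.isOpen (h.smooth_v i) i l hx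
    rw [this, mul_zero]
  simp only [h.lap_pd_v hx, Finset.sum_add_distrib, h2, add_zero] at h1
  have h3 : lap p x = ∑ i, pd (pd p i) i x := rfl
  rw [h3]
  linarith

theorem lap_pd_p (h : IsNSComp v p Ω) (hx : x ∈ Ω) (j : Fin 3) :
    lap (pd p j) x = -2 * ∑ i, ∑ l, pd (v l) i x * pd (pd (v i) l) j x := by
  have h2 := h.differentiableAt_pd_v hx
  have hneg : Set.EqOn (lap p) (fun y => -1 * ∑ i, ∑ l, pd (v l) i y * pd (v i) l y) Ω :=
    fun y hy => by
      rw [h.lap_p hy]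
      ring
  rw [lap_pd h.isOpen h.smooth_p j hx, pd_congr h.isOpen hneg j hx, pd_const_mul,
    pd_sum (fun i => by fun_prop)]
  have e : ∀ i, pd (fun y => ∑ l, pd (v l) i y * pd (v i) l y) j x =
      ∑ l, (pd (v i) l x * pd (pd (v l) i) j x + pd (v l) i x * pd (pd (v i) l) j x) := fun i => by
    rw [pd_sum (fun l => by fun_prop)]
    refine Finset.sum_congr rfl fun l _ => ?_
    rw [pd_mul (h2 l i) (h2 i l)]
    ring
  simp only [e, Finset.sum_add_distrib]
  rw [Finset.sum_comm (f := fun i l => pd (v i) l x * pd (pd (v l) i) j x)]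
  ring

theorem abs_lap_v_le (h : IsNSComp v p Ω) (hx : x ∈ Ω) (j : Fin 3) :
    |lap (v j) x| ≤ 3 * gradSum (vort v) x := by
  rw [h.lap_v hx]
  refine (Finset.abs_sum_le_sum_abs _ _).trans ?_
  refine (Finset.sum_le_sum fun i _ => abs_pd_le_gradSum (vort v) (i, j) i x).trans ?_
  simp

theorem abs_lap_vort_le (h : IsNSComp v p Ω) (hx : x ∈ Ω) {K : ℝ} (hK : ∀ j, |v j x| ≤ K)
    (a : Fin 3 × Fin 3) :
    |lap (vort v a) x| ≤ 3 * K * gradSum (vort v) x + 6 * gradSum v x ^ 2 := by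
  obtain ⟨i, j⟩ := a
  have hK0 : 0 ≤ K := (abs_nonneg _).trans (hK 0)
  have hg := gradSum_nonneg v x
  have hb : ∀ a b c d, |pd (v a) b x * pd (v c) d x| ≤ gradSum v x ^ 2 := fun a b c d => by
    rw [abs_mul, sq]
    exact mul_le_mul (abs_pd_le_gradSum v a b x) (abs_pd_le_gradSum v c d x) (abs_nonneg _) hg
  rw [h.lap_vort hx]
  refine (Finset.abs_sum_le_sum_abs _ _).trans ?_
  have : ∀ l, |pd (v l) i x * pd (v j) l x - pd (v l) j x * pd (v i) l x
        + v l x * pd (vort v (i, j)) l x| ≤ K * gradSum (vort v) x + 2 * gradSum v x ^ 2 :=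
    fun l => by
      have h1 := hb l i j l
      have h2 := hb l j i l
      have h3 : |v l x * pd (vort v (i, j)) l x| ≤ K * gradSum (vort v) x := by
        rw [abs_mul]
        exact mul_le_mul (hK l) (abs_pd_le_gradSum _ _ l x) (abs_nonneg _) hK0
      rw [abs_le] at *
      constructor <;> linarith
  refine (Finset.sum_le_sum fun l _ => this l).trans ?_
  simp
  linarith

theorem abs_pd_p_le (h : IsNSComp v p Ω) (hx : x ∈ Ω) {K : ℝ} (hK : ∀ j, |v j x| ≤ K)
    (j : Fin 3) : |pd p j x| ≤ 3 * gradSum (vort v) x + 3 * (K * gradSum v x) := by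
  have hK0 : 0 ≤ K := (abs_nonneg _).trans (hK 0)
  have h1 := h.abs_lap_v_le hx j
  have h2 : |∑ l, v l x * pd (v j) l x| ≤ 3 * (K * gradSum v x) := by
    refine (Finset.abs_sum_le_sum_abs _ _).trans ?_
    have : ∀ l, |v l x * pd (v j) l x| ≤ K * gradSum v x := fun l => by
      rw [abs_mul]
      exact mul_le_mul (hK l) (abs_pd_le_gradSum _ _ l x) (abs_nonneg _) hK0
    refine (Finset.sum_le_sum fun l _ => this l).trans ?_
    simp
  have h3 := h.momentum x hx j
  rw [abs_le] at *
  constructor <;> linarith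

end IsNSComp

theorem abs_vort_le (v : Fin 3 → E3 → ℝ) (a : Fin 3 × Fin 3) (x : E3) :
    |vort v a x| ≤ 2 * gradSum v x := by
  have h1 := abs_pd_le_gradSum v a.2 a.1 x
  have h2 := abs_pd_le_gradSum v a.1 a.2 x
  unfold vort
  rw [abs_le] at *
  constructor <;> linarith

/-- Closing the coupled interpolation inequalities for velocity gradient and vorticity gradient. -/
theorem exists_bound_of_interpolation {M : ℝ} (hM : 0 < M) :
    ∃ C : ℝ, 0 ≤ C ∧ ∀ K a b : ℝ, 0 < K → K ≤ M → 0 ≤ a → 0 ≤ b →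
      (∀ τ, 0 < τ → τ ≤ 1 / 2 → a ≤ 27 * K / τ + 54 * τ * b) →
      (∀ θ, 0 < θ → θ ≤ 1 / 2 → b ≤ 324 * (a / θ + θ * (K * b + a ^ 2))) →
      a ≤ C * K ∧ b ≤ C * K := by
  set θ : ℝ := 1 / (2 + 4 * 324 * 6562 * M) with hθ
  have hθ0 : 0 < θ := by positivity
  have hθ1 : θ ≤ 1 / 2 := one_div_le_one_div_of_le (by norm_num)
    (by linarith [mul_pos (by norm_num : (0 : ℝ) < 4 * 324 * 6562) hM])
  have hθM : 324 * 6562 * (θ * M) ≤ 1 / 4 := by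
    have : θ * (2 + 4 * 324 * 6562 * M) = 1 := by
      rw [hθ]
      field_simp
    linarith
  set Y : ℝ := 324 * 81 / θ with hY
  refine ⟨81 * (2 * Y ^ 2 + 2), by positivity, ?_⟩
  intro K a b hK hKM ha hb h1 h2
  set S : ℝ := √(K * (K + b)) with hS
  have hS0 : 0 < S := Real.sqrt_pos.mpr (by positivity)
  have hSS : S ^ 2 = K * (K + b) := Real.sq_sqrt (by positivity)
  have hSle : S ≤ K + b := by
    nlinarith
  have haS : a ≤ 81 * S := by
    have hτ := h1 (S / (2 * (K + b))) (by positivity) (by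
      rw [div_le_div_iff₀ (by positivity) (by norm_num)]
      linarith)
    have e1 : 27 * K / (S / (2 * (K + b))) = 54 * S := by
      rw [div_div_eq_mul_div, div_eq_iff hS0.ne']
      linear_combination -54 * hSS
    have e2 : 54 * (S / (2 * (K + b))) * b ≤ 27 * S := by
      rw [show 54 * (S / (2 * (K + b))) * b = 27 * S * (b / (K + b)) by field_simp; ring]
      exact mul_le_of_le_one_right (by positivity)
        ((div_le_one (by positivity)).mpr (by linarith))
    linarith
  have ha2 : K * b + a ^ 2 ≤ 6562 * (K * (K + b)) := by
    have : a ^ 2 ≤ (81 * S) ^ 2 := pow_le_pow_left₀ ha haS 2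
    nlinarith
  have hb1 := h2 θ hθ0 hθ1
  have hb2 : 324 * (a / θ) ≤ Y ^ 2 * K + (K + b) / 4 := by
    have h3 : 324 * (a / θ) ≤ Y * S := by
      rw [hY, show 324 * 81 / θ * S = 324 * ((81 * S) / θ) by ring]
      gcongr
    have h4 : (Y * S) ^ 2 ≤ (Y ^ 2 * K + (K + b) / 4) ^ 2 := by
      rw [mul_pow, hSS]
      nlinarith [sq_nonneg (Y ^ 2 * K - (K + b) / 4)]
    exact h3.trans (le_of_sq_le_sq h4 (by positivity))
  have hb3 : 324 * (θ * (K * b + a ^ 2)) ≤ (K + b) / 4 := by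
    calc 324 * (θ * (K * b + a ^ 2)) ≤ 324 * (θ * (6562 * (M * (K + b)))) := by
          gcongr
          exact ha2.trans (by gcongr)
      _ = 324 * 6562 * (θ * M) * (K + b) := by ring
      _ ≤ 1 / 4 * (K + b) := by gcongr
      _ = (K + b) / 4 := by ring
  have hbK : b ≤ (2 * Y ^ 2 + 1) * K := by linarith
  constructor
  · have : S ≤ (2 * Y ^ 2 + 2) * K := by linarith
    linarith
  · have : 0 ≤ Y ^ 2 * K := by positivity
    linarith

theorem exists_first_derivative_bound_of_pos {M : ℝ} (hM : 0 < M) :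
    ∃ C : ℝ, 0 ≤ C ∧ ∀ (v : Fin 3 → E3 → ℝ) (p : E3 → ℝ) (Ω : Set E3) (x₀ : E3) (K : ℝ),
      IsNSComp v p Ω → closedBall x₀ 1 ⊆ Ω → 0 < K → K ≤ M →
      (∀ x ∈ closedBall x₀ 1, ∀ j, |v j x| ≤ K) →
      ∀ x ∈ closedBall x₀ (1 / 2), ∀ j, (∀ i, |pd (v j) i x| ≤ C * K) ∧ |pd p j x| ≤ C * K := by
  obtain ⟨C, hC0, hC⟩ := exists_bound_of_interpolation hM
  refine ⟨12 * C + 6 * (M * C) + 2 * C, by positivity, ?_⟩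
  intro v p Ω x₀ K h hsub hK hKM hv x hx j
  obtain ⟨a, ha0, ha, hamax⟩ := exists_weighted_max (x₀ := x₀) one_pos 1
    ((continuousOn_gradSum h.isOpen h.smooth_v).mono hsub) (gradSum_nonneg v) one_ne_zero
  obtain ⟨b, hb0, hb, hbmax⟩ := exists_weighted_max (x₀ := x₀) one_pos 2
    ((continuousOn_gradSum h.isOpen h.smooth_vort).mono hsub) (gradSum_nonneg (vort v))
    two_ne_zero
  have hineq1 : ∀ τ, 0 < τ → τ ≤ 1 / 2 → a ≤ 27 * K / τ + 54 * τ * b := by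
    intro τ hτ0 hτ1
    rcases hamax with h' | ⟨z, hz, haz⟩
    · rw [h']
      positivity
    set d := 1 - dist z x₀ with hd
    have hnear := fun y hy => mem_and_half_le_of_mem_closedBall (y := y) hz hτ1 hy
    have hpd : ∀ j i, |pd (v j) i z| ≤ (3 * K / τ + 6 * τ * b) / d := fun j i => by
      have h' := abs_pd_le (A := K) (N := 3 * (2 ^ 2 * b / d ^ 2)) i h.isOpen (h.smooth_v j)
        (mul_pos hτ0 hz) (fun y hy => hsub (hnear y hy).1) (fun y hy => hv y (hnear y hy).1 j)
        (fun y hy => (h.abs_lap_v_le (hsub (hnear y hy).1) j).trans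
          (mul_le_mul_of_nonneg_left (le_of_weighted_le hz (hnear y hy).2 (gradSum_nonneg _ y)
            (hb y (hnear y hy).1)) (by norm_num)))
      refine h'.trans (le_of_eq ?_)
      field_simp
      ring
    have hsum := gradSum_le hpd
    calc a = d * gradSum v z := by rw [haz, pow_one]
      _ ≤ d * (3 * Fintype.card (Fin 3) * ((3 * K / τ + 6 * τ * b) / d)) := by gcongr
      _ = 27 * K / τ + 54 * τ * b := by
        simp only [Fintype.card_fin]
        field_simp
        push_cast
        ring
  have hineq2 : ∀ θ, 0 < θ → θ ≤ 1 / 2 → b ≤ 324 * (a / θ + θ * (K * b + a ^ 2)) := by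
    intro θ hθ0 hθ1
    rcases hbmax with h' | ⟨z, hz, hbz⟩
    · rw [h']
      positivity
    set d := 1 - dist z x₀ with hd
    have hd1 : d ≤ 1 := by linarith [dist_nonneg (x := z) (y := x₀)]
    have hnear := fun y hy => mem_and_half_le_of_mem_closedBall (y := y) hz hθ1 hy
    have hg1 : ∀ y ∈ closedBall z (θ * d), gradSum v y ≤ 2 ^ 1 * a / d ^ 1 := fun y hy =>
      le_of_weighted_le hz (hnear y hy).2 (gradSum_nonneg _ y) (ha y (hnear y hy).1)
    have hg2 : ∀ y ∈ closedBall z (θ * d), gradSum (vort v) y ≤ 2 ^ 2 * b / d ^ 2 := fun y hy =>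
      le_of_weighted_le hz (hnear y hy).2 (gradSum_nonneg _ y) (hb y (hnear y hy).1)
    have hpd : ∀ c i, |pd (vort v c) i z| ≤
        (12 * a / θ + θ * (6 * K * b + 12 * a ^ 2)) / d ^ 2 := fun c i => by
      have h' := abs_pd_le (A := 2 * (2 ^ 1 * a / d ^ 1))
        (N := 3 * K * (2 ^ 2 * b / d ^ 2) + 6 * (2 ^ 1 * a / d ^ 1) ^ 2) i h.isOpen
        (h.smooth_vort c) (mul_pos hθ0 hz) (fun y hy => hsub (hnear y hy).1)
        (fun y hy => (abs_vort_le v c y).trans (by gcongr; exact hg1 y hy))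
        (fun y hy => (h.abs_lap_vort_le (hsub (hnear y hy).1) (hv y (hnear y hy).1) c).trans (by
          have := gradSum_nonneg v y
          gcongr
          · exact hg2 y hy
          · exact hg1 y hy))
      refine h'.trans ?_
      have e : 3 * (2 * (2 ^ 1 * a / d ^ 1)) / (θ * d)
          + θ * d * (3 * K * (2 ^ 2 * b / d ^ 2) + 6 * (2 ^ 1 * a / d ^ 1) ^ 2) / 2
          = (12 * a / θ + d * (θ * (6 * K * b + 12 * a ^ 2))) / d ^ 2 := by
        field_simp
        ring
      rw [e]
      have : d * (θ * (6 * K * b + 12 * a ^ 2)) ≤ θ * (6 * K * b + 12 * a ^ 2) :=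
        mul_le_of_le_one_left (by positivity) hd1
      exact div_le_div_of_nonneg_right (by linarith) (by positivity)
    have hsum := gradSum_le hpd
    calc b = d ^ 2 * gradSum (vort v) z := hbz
      _ ≤ d ^ 2 * (3 * Fintype.card (Fin 3 × Fin 3) *
          ((12 * a / θ + θ * (6 * K * b + 12 * a ^ 2)) / d ^ 2)) := by gcongr
      _ = 324 * (a / θ + θ * (K * b / 2 + a ^ 2)) := by
        simp only [Fintype.card_prod, Fintype.card_fin]
        field_simp
        push_cast
        ring
      _ ≤ _ := by
        gcongr
        have : 0 ≤ K * b := by positivity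
        linarith
  obtain ⟨haC, hbC⟩ := hC K a b hK hKM ha0 hb0 hineq1 hineq2
  have hxd : dist x x₀ ≤ 1 / 2 := hx
  have hx1 : x ∈ closedBall x₀ 1 := closedBall_subset_closedBall (by norm_num) hx
  have hg1 : gradSum v x ≤ 2 * (C * K) := by
    refine (le_of_weighted_le one_pos (by linarith) (gradSum_nonneg _ x) (ha x hx1)).trans ?_
    norm_num
    linarith
  have hg2 : gradSum (vort v) x ≤ 4 * (C * K) := by
    refine (le_of_weighted_le one_pos (by linarith) (gradSum_nonneg _ x) (hb x hx1)).trans ?_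
    norm_num
    linarith
  have hCK : 0 ≤ C * K := by positivity
  have hMCK : 0 ≤ M * (C * K) := by positivity
  constructor
  · intro i
    refine (abs_pd_le_gradSum v j i x).trans ?_
    linarith
  · refine (h.abs_pd_p_le (hsub hx1) (hv x hx1) j).trans ?_
    have : K * gradSum v x ≤ M * (2 * (C * K)) :=
      mul_le_mul hKM hg1 (gradSum_nonneg _ x) hM.le
    linarith

end FirstDerivatives

section HigherDerivatives

theorem exists_first_derivative_bound {M : ℝ} (hM : 0 < M) : ∃ C, 0 ≤ C ∧
    ∀ (v : Fin 3 → E3 → ℝ) (p : E3 → ℝ) (Ω : Set E3) (x₀ : E3) (K : ℝ), IsNSComp v p Ω →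
      closedBall x₀ 1 ⊆ Ω → 0 ≤ K → K ≤ M → (∀ x ∈ closedBall x₀ 1, ∀ j, |v j x| ≤ K) →
      ∀ x ∈ closedBall x₀ (1 / 2), ∀ j, (∀ i, |pd (v j) i x| ≤ C * K) ∧ |pd p j x| ≤ C * K := by
  obtain ⟨C, hC, h⟩ := exists_first_derivative_bound_of_pos hM
  refine ⟨C, hC, fun v p Ω x₀ K hv hsub hK hKM hb x hx j => ?_⟩
  rcases hK.eq_or_lt with rfl | hK
  · have key : ∀ t : ℝ, (∀ K, 0 < K → K ≤ M → t ≤ C * K) → t ≤ C * 0 := fun t ht => by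
      refine le_of_forall_pos_le_add fun ε hε => ?_
      refine (ht (min M (ε / (C + 1))) (by positivity) (min_le_left _ _)).trans ?_
      calc C * min M (ε / (C + 1)) ≤ C * (ε / (C + 1)) := by gcongr; exact min_le_right _ _
        _ ≤ C * 0 + ε := by
          rw [mul_zero, zero_add, ← mul_div_assoc, div_le_iff₀ (by positivity)]
          nlinarith
    have hpos : ∀ K, 0 < K → K ≤ M → ∀ j, (∀ i, |pd (v j) i x| ≤ C * K) ∧ |pd p j x| ≤ C * K :=
      fun K hK hKM => h v p Ω x₀ K hv hsub hK hKM (fun y hy j => (hb y hy j).trans hK.le) x hx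
    exact ⟨fun i => key _ fun K h1 h2 => (hpos K h1 h2 j).1 i,
      key _ fun K h1 h2 => (hpos K h1 h2 j).2⟩
  · exact h v p Ω x₀ K hv hsub hK hKM hb x hx j

/-- Index set for the velocity components, their first derivatives, and the pressure gradient. -/
abbrev NSIdx : Type := Fin 3 ⊕ ((Fin 3 × Fin 3) ⊕ Fin 3)

/-- Velocity components, their first derivatives, and the pressure gradient as one family. -/
def nsFam (v : Fin 3 → E3 → ℝ) (p : E3 → ℝ) : NSIdx → E3 → ℝ
  | .inl j => v j
  | .inr (.inl (i, j)) => pd (v j) i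
  | .inr (.inr j) => pd p j

/-- Linear coefficients of the system satisfied by `nsFam`. -/
def nsLin : NSIdx → NSIdx → Fin 3 → ℝ
  | .inl j, .inr (.inl (i, j')), k => if k = i ∧ j' = j then 1 else 0
  | .inr (.inl (i, j)), .inr (.inr j'), k => if k = i ∧ j' = j then 1 else 0
  | _, _, _ => 0

/-- Bilinear coefficients of the system satisfied by `nsFam`. -/
def nsBil : NSIdx → NSIdx → NSIdx → Fin 3 → ℝ
  | .inr (.inl (i, j)), .inr (.inl (i', l)), .inl j', k =>
      if k = l ∧ j' = j ∧ i' = i then 1 else 0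
  | .inr (.inl (i, j)), .inl l, .inr (.inl (i', j')), k =>
      if k = l ∧ j' = j ∧ i' = i then 1 else 0
  | .inr (.inr j), .inr (.inl (i, l)), .inr (.inl (l', i')), k =>
      if k = j ∧ i' = i ∧ l' = l then -2 else 0
  | _, _, _, _ => 0

theorem IsNSComp.isSys {v : Fin 3 → E3 → ℝ} {p : E3 → ℝ} {Ω : Set E3} (h : IsNSComp v p Ω) :
    IsSys nsLin nsBil (nsFam v p) Ω := by
  rintro x hx (j | ⟨i, j⟩ | j)
  · change lap (v j) x = _
    simp [nsFam, nsLin, nsBil, Fintype.sum_sum_type, Fintype.sum_prod_type, ite_and]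
    rfl
  · change lap (pd (v j) i) x = _
    rw [h.lap_pd_v hx]
    simp [nsFam, nsLin, nsBil, Fintype.sum_sum_type, Fintype.sum_prod_type, ite_and,
      Finset.sum_add_distrib]
    ring
  · change lap (pd p j) x = _
    rw [h.lap_pd_p hx, Finset.mul_sum]
    simp [nsFam, nsLin, nsBil, Fintype.sum_sum_type, Fintype.sum_prod_type, ite_and,
      Finset.mul_sum]

theorem IsNSComp.smooth_nsFam {v : Fin 3 → E3 → ℝ} {p : E3 → ℝ} {Ω : Set E3}
    (h : IsNSComp v p Ω) : ∀ a, ContDiffOn ℝ ∞ (nsFam v p a) Ω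
  | .inl j => h.smooth_v j
  | .inr (.inl (i, j)) => smooth_pd h.isOpen (h.smooth_v j) i
  | .inr (.inr j) => smooth_pd h.isOpen h.smooth_p j

theorem exists_pdw_pressure_bound {M : ℝ} (hM : 0 < M) (w : List (Fin 3)) : ∃ C, 0 ≤ C ∧
    ∀ (v : Fin 3 → E3 → ℝ) (p : E3 → ℝ) (Ω : Set E3) (x₀ : E3) (K : ℝ), IsNSComp v p Ω →
      closedBall x₀ 1 ⊆ Ω → 0 ≤ K → K ≤ M → (∀ x ∈ closedBall x₀ 1, ∀ j, |v j x| ≤ K) →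
      ∀ j, |pdw w (pd p j) x₀| ≤ C * K := by
  obtain ⟨C₁, hC₁, h₁⟩ := exists_first_derivative_bound hM
  obtain ⟨C₂, hC₂, h₂⟩ := exists_pdw_bound w nsLin nsBil (M := (1 + C₁) * M) (ρ := 1 / 2)
    (by positivity) (by norm_num)
  refine ⟨C₂ * (1 + C₁), by positivity, fun v p Ω x₀ K h hsub hK hKM hb j => ?_⟩
  rw [mul_assoc]
  have hsub' : closedBall x₀ (1 / 2) ⊆ closedBall x₀ 1 := closedBall_subset_closedBall (by norm_num)
  refine h₂ Ω (nsFam v p) x₀ ((1 + C₁) * K) h.isOpen h.smooth_nsFam h.isSys (hsub'.trans hsub)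
    (by gcongr) (fun x hx a => ?_) (.inr (.inr j))
  have h3 := h₁ v p Ω x₀ K h hsub hK hKM hb x hx
  have h4 : K ≤ (1 + C₁) * K := by nlinarith [mul_nonneg hC₁ hK]
  have h5 : C₁ * K ≤ (1 + C₁) * K := by nlinarith
  rcases a with j | ⟨i, j⟩ | j
  · exact (hb x (hsub' hx) j).trans h4
  · exact ((h3 j).1 i).trans h5
  · exact (h3 j).2.trans h5

theorem pdw_affine (x₀ : E3) (r : ℝ) (w : List (Fin 3)) : ∀ (c : ℝ) (f : E3 → ℝ) (y : E3),
    pdw w (fun z => c * f (x₀ + r • z)) y = c * r ^ w.length * pdw w f (x₀ + r • y) := by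
  induction w with
  | nil => simp [pdw]
  | cons j w ih =>
    intro c f y
    have e : pd (fun z => c * f (x₀ + r • z)) j = fun z => c * r * pd f j (x₀ + r • z) := by
      funext z
      rw [pd_const_mul c (fun z => f (x₀ + r • z)) j z, pd_affine]
      ring
    simp only [pdw, e, ih, List.length_cons]
    ring

theorem IsNSComp.rescale {v : Fin 3 → E3 → ℝ} {p : E3 → ℝ} {Ω : Set E3} (h : IsNSComp v p Ω)
    (x₀ : E3) (r : ℝ) :
    IsNSComp (fun i z => r * v i (x₀ + r • z)) (fun z => r ^ 2 * p (x₀ + r • z))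
      ((fun z => x₀ + r • z) ⁻¹' Ω) where
  isOpen := h.isOpen.preimage (by fun_prop)
  smooth_v i := contDiffOn_const.mul (smooth_affine (h.smooth_v i) x₀ r)
  smooth_p := contDiffOn_const.mul (smooth_affine h.smooth_p x₀ r)
  momentum x hx i := by
    have e := h.momentum _ hx i
    rw [lap_const_mul r (fun z => v i (x₀ + r • z)) x, lap_affine, e]
    simp only [pd_affine, pd_const_mul _ (fun z => v _ (x₀ + r • z)),
      pd_const_mul _ (fun z => p (x₀ + r • z)), mul_add, Finset.mul_sum]
    congr 1
    · exact Finset.sum_congr rfl fun l _ => by ring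
    · ring
  div_free x hx := by
    have e := h.div_free _ hx
    simp only [pd_affine, pd_const_mul _ (fun z => v _ (x₀ + r • z)), ← Finset.mul_sum]
    rw [e]
    simp

theorem exists_pdw_pressure_decay {M : ℝ} (hM : 0 < M) (w : List (Fin 3)) : ∃ C, 0 ≤ C ∧
    ∀ (v : Fin 3 → E3 → ℝ) (p : E3 → ℝ) (R Cstar : ℝ), 0 < R →
      IsNSComp v p (closedBall 0 R)ᶜ → Cstar ≤ M →
      (∀ x ∈ (closedBall (0 : E3) R)ᶜ, ∀ j, |v j x| ≤ Cstar / (R + ‖x‖)) →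
      ∀ x, 2 * R ≤ ‖x‖ → ∀ j, |pdw w (pd p j) x| ≤ C * Cstar / (R + ‖x‖) ^ (w.length + 3) := by
  obtain ⟨C, hC, h⟩ := exists_pdw_pressure_bound hM w
  refine ⟨C * 6 ^ (w.length + 3), by positivity, fun v p R Cstar hR hv hCM hb x hx j => ?_⟩
  set r := ‖x‖ / 4 with hr
  have hr0 : 0 < r := by linarith
  have hmem : ∀ z ∈ closedBall (0 : E3) 1, 3 * r ≤ ‖x + r • z‖ := fun z hz => by
    have h1 : ‖r • z‖ ≤ r := by
      rw [norm_smul, Real.norm_of_nonneg hr0.le]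
      have := mem_closedBall_zero_iff.1 hz
      nlinarith
    have h2 := norm_sub_norm_le x (-(r • z))
    rw [norm_neg, sub_neg_eq_add] at h2
    linarith
  have hmem' : ∀ z ∈ closedBall (0 : E3) 1, x + r • z ∈ (closedBall (0 : E3) R)ᶜ := fun z hz => by
    have := hmem z hz
    simp only [Set.mem_compl_iff, mem_closedBall_zero_iff, not_le]
    linarith
  have hK0 : 0 ≤ Cstar := by
    have h0 := (abs_nonneg _).trans (hb _ (hmem' 0 (by simp)) 0)
    by_contra hneg
    exact absurd h0 (not_le.2 (div_neg_of_neg_of_pos (not_le.1 hneg) (by positivity)))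
  have key := h _ _ _ 0 Cstar (hv.rescale x r) hmem' hK0 hCM (fun z hz i => by
    rw [abs_mul, abs_of_pos hr0]
    have h1 := hb _ (hmem' z hz) i
    have h2 : Cstar / (R + ‖x + r • z‖) ≤ Cstar / r := by
      have := hmem z hz
      gcongr
      linarith
    calc r * |v i (x + r • z)| ≤ r * (Cstar / r) := by gcongr; exact h1.trans h2
      _ = Cstar := by field_simp) j
  have e : pd (fun z => r ^ 2 * p (x + r • z)) j = fun z => r ^ 3 * pd p j (x + r • z) := by
    funext z
    rw [pd_const_mul (r ^ 2) (fun z => p (x + r • z)) j z, pd_affine]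
    ring
  rw [e, pdw_affine, smul_zero, add_zero, abs_mul, abs_of_pos (by positivity), ← pow_add,
    add_comm 3] at key
  rw [le_div_iff₀ (by positivity)]
  calc |pdw w (pd p j) x| * (R + ‖x‖) ^ (w.length + 3)
      ≤ |pdw w (pd p j) x| * (6 * r) ^ (w.length + 3) := by gcongr; linarith
    _ = 6 ^ (w.length + 3) * (r ^ (w.length + 3) * |pdw w (pd p j) x|) := by rw [mul_pow]; ring
    _ ≤ 6 ^ (w.length + 3) * (C * Cstar) := by gcongr
    _ = C * 6 ^ (w.length + 3) * Cstar := by ring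

end HigherDerivatives

section PressureDecay

theorem fderiv_eq_sum_pd (f : E3 → ℝ) :
    fderiv ℝ f = fun x => ∑ j, (ContinuousLinearMap.toSpanSingleton ℝ
      (EuclideanSpace.proj j : E3 →L[ℝ] ℝ)) (pd f j x) := by
  funext x
  ext y
  have e : y = ∑ j, y j • ee j := by
    ext i
    simp [ee, Pi.single_apply]
  conv_lhs => rw [e]
  simp [pd, mul_comm]

theorem norm_proj_le_one (j : Fin 3) : ‖(EuclideanSpace.proj j : E3 →L[ℝ] ℝ)‖ ≤ 1 :=
  ContinuousLinearMap.opNorm_le_bound _ zero_le_one fun x => by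
    simpa using abs_coord_le_norm x j

theorem norm_iteratedFDeriv_le_of_pdw {Ω : Set E3} (hΩ : IsOpen Ω) {x : E3} (hx : x ∈ Ω) {B : ℝ}
    (k : ℕ) : ∀ {f : E3 → ℝ}, ContDiffOn ℝ ∞ f Ω →
      (∀ w : List (Fin 3), w.length = k → |pdw w f x| ≤ B) →
      ‖iteratedFDeriv ℝ k f x‖ ≤ 3 ^ k * B := by
  induction k with
  | zero =>
    intro f _ hB
    simpa [pdw] using hB [] rfl
  | succ k ih =>
    intro f hf hB
    have hpd : ∀ j, ContDiffAt ℝ ∞ (pd f j) x := fun j =>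
      (smooth_pd hΩ hf j).contDiffAt (hΩ.mem_nhds hx)
    have hk : (k : WithTop ℕ∞) ≤ ∞ := by exact_mod_cast le_top
    rw [← norm_iteratedFDeriv_fderiv, fderiv_eq_sum_pd, iteratedFDeriv_fun_sum_apply
      (f := fun j z => (ContinuousLinearMap.toSpanSingleton ℝ
        (EuclideanSpace.proj j : E3 →L[ℝ] ℝ)) (pd f j z))
      fun j _ => (ContinuousLinearMap.contDiff _).contDiffAt.comp x ((hpd j).of_le hk)]
    calc _ ≤ ∑ j : Fin 3, ‖iteratedFDeriv ℝ k (fun z => (ContinuousLinearMap.toSpanSingleton ℝ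
          (EuclideanSpace.proj j : E3 →L[ℝ] ℝ)) (pd f j z)) x‖ := norm_sum_le _ _
      _ ≤ ∑ _j : Fin 3, 3 ^ k * B := Finset.sum_le_sum fun j _ => by
        refine (ContinuousLinearMap.norm_iteratedFDeriv_comp_left _ (hpd j) hk).trans ?_
        have h1 : ‖ContinuousLinearMap.toSpanSingleton ℝ
            (EuclideanSpace.proj j : E3 →L[ℝ] ℝ)‖ ≤ 1 := by
          rw [ContinuousLinearMap.norm_toSpanSingleton]
          exact norm_proj_le_one j
        have h2 := ih (smooth_pd hΩ hf j) fun w hw => hB (j :: w) (by simp [hw])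
        exact (mul_le_of_le_one_left (norm_nonneg _) h1).trans h2
      _ = 3 ^ (k + 1) * B := by
        simp
        ring

theorem norm_fderiv_le_of_pd {f : E3 → ℝ} {x : E3} {B : ℝ} (h : ∀ j, |pd f j x| ≤ B) :
    ‖fderiv ℝ f x‖ ≤ 3 * B := by
  rw [fderiv_eq_sum_pd]
  calc _ ≤ ∑ _j : Fin 3, B := norm_sum_le_of_le _ fun j _ => by
        rw [ContinuousLinearMap.toSpanSingleton_apply, norm_smul]
        exact (mul_le_of_le_one_right (norm_nonneg _) (norm_proj_le_one j)).trans (h j)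
    _ = 3 * B := by simp

theorem norm_ge_of_mem_segment {x y z : E3} {r : ℝ} (hr : 0 ≤ r) (hx : r ≤ ‖x‖) (hy : r ≤ ‖y‖)
    (hxy : 0 ≤ inner ℝ x y) (hz : z ∈ segment ℝ x y) : r / 2 ≤ ‖z‖ := by
  obtain ⟨a, b, ha, hb, hab, rfl⟩ := hz
  refine le_of_sq_le_sq ?_ (norm_nonneg _)
  rw [norm_add_sq_real, norm_smul, norm_smul, inner_smul_left, inner_smul_right,
    Real.norm_of_nonneg ha, Real.norm_of_nonneg hb]
  have h1 : (a * r) ^ 2 ≤ (a * ‖x‖) ^ 2 := by gcongr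
  have h2 : (b * r) ^ 2 ≤ (b * ‖y‖) ^ 2 := by gcongr
  have h3 : 0 ≤ a * (b * inner ℝ x y) := by positivity
  have h4 : r ^ 2 / 2 ≤ (a * r) ^ 2 + (b * r) ^ 2 := by
    obtain rfl : b = 1 - a := by linarith
    nlinarith [sq_nonneg ((2 * a - 1) * r)]
  simp only [RCLike.conj_to_real]
  nlinarith [sq_nonneg r]

theorem abs_sub_le_of_norm_fderiv_le {f : E3 → ℝ} {x y : E3} {A S r : ℝ} (hA : 0 ≤ A) (hr : 0 < r)
    (hSr : S ≤ r) (hf : ∀ z, S ≤ ‖z‖ → DifferentiableAt ℝ f z)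
    (hb : ∀ z, S ≤ ‖z‖ → ‖fderiv ℝ f z‖ ≤ A / ‖z‖ ^ 3) (hz : ∀ z ∈ segment ℝ x y, r ≤ ‖z‖) :
    |f y - f x| ≤ A / r ^ 3 * ‖y - x‖ :=
  (convex_segment x y).norm_image_sub_le_of_norm_fderiv_le
    (fun z h => hf z (hSr.trans (hz z h)))
    (fun z h => (hb z (hSr.trans (hz z h))).trans (by
      have := hz z h
      gcongr))
    (left_mem_segment ℝ x y) (right_mem_segment ℝ x y)

theorem exists_limit_along_ray {f : E3 → ℝ} {A S : ℝ} (hA : 0 ≤ A) (hS : 0 < S)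
    (hf : ∀ z, S ≤ ‖z‖ → DifferentiableAt ℝ f z)
    (hb : ∀ z, S ≤ ‖z‖ → ‖fderiv ℝ f z‖ ≤ A / ‖z‖ ^ 3) {x : E3} (hx : S ≤ ‖x‖) :
    ∃ L, Tendsto (fun n : ℕ => f ((2 : ℝ) ^ n • x)) atTop (𝓝 L) ∧ |f x - L| ≤ 2 * A / ‖x‖ ^ 2 := by
  have hx0 : 0 < ‖x‖ := hS.trans_le hx
  have hstep : ∀ n : ℕ, dist (f ((2 : ℝ) ^ n • x)) (f ((2 : ℝ) ^ (n + 1) • x)) ≤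
      A / ‖x‖ ^ 2 * (1 / 4) ^ n := fun n => by
    have hn : ‖(2 : ℝ) ^ n • x‖ = 2 ^ n * ‖x‖ := by simp [norm_smul]
    have h2 : (2 : ℝ) ^ (n + 1) • x = (2 : ℝ) ^ n • x + (2 : ℝ) ^ n • x := by
      rw [← add_smul]; ring_nf
    have hge : ‖x‖ ≤ 2 ^ n * ‖x‖ := le_mul_of_one_le_left hx0.le (one_le_pow₀ (by norm_num))
    rw [dist_comm, Real.dist_eq]
    refine (abs_sub_le_of_norm_fderiv_le hA (r := 2 ^ n * ‖x‖) (by positivity) (hx.trans hge) hf hb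
      ?_).trans ?_
    · rintro z ⟨a, b, ha, hb, hab, rfl⟩
      have e : a • (2 : ℝ) ^ n • x + b • (2 : ℝ) ^ (n + 1) • x = (1 + b) • (2 : ℝ) ^ n • x := by
        rw [h2, ← hab]
        module
      rw [e, norm_smul, hn, Real.norm_of_nonneg (by positivity)]
      exact le_mul_of_one_le_left (by positivity) (by linarith)
    · rw [h2, add_sub_cancel_left, hn]
      refine le_of_eq ?_
      have : (4 : ℝ) ^ n = 2 ^ n * 2 ^ n := by rw [← mul_pow]; norm_num
      rw [one_div, inv_pow, this]
      field_simp
  obtain ⟨L, hL⟩ := cauchySeq_tendsto_of_complete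
    (cauchySeq_of_le_geometric _ _ (by norm_num) hstep)
  refine ⟨L, hL, ?_⟩
  have h0 := dist_le_of_le_geometric_of_tendsto₀ _ _ (by norm_num) hstep hL
  rw [pow_zero, one_smul, Real.dist_eq, show (1 : ℝ) - 1 / 4 = 3 / 4 by norm_num] at h0
  refine h0.trans ?_
  rw [mul_div_assoc]
  have : 0 ≤ A / ‖x‖ ^ 2 := by positivity
  linarith

theorem limits_along_rays_eq {f : E3 → ℝ} {A S : ℝ} (hA : 0 ≤ A) (hS : 0 < S)
    (hf : ∀ z, S ≤ ‖z‖ → DifferentiableAt ℝ f z)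
    (hb : ∀ z, S ≤ ‖z‖ → ‖fderiv ℝ f z‖ ≤ A / ‖z‖ ^ 3) {x y : E3} (hx : S ≤ ‖x‖) (hy : S ≤ ‖y‖)
    (hxy : 0 ≤ inner ℝ x y) {Lx Ly : ℝ}
    (hLx : Tendsto (fun n : ℕ => f ((2 : ℝ) ^ n • x)) atTop (𝓝 Lx))
    (hLy : Tendsto (fun n : ℕ => f ((2 : ℝ) ^ n • y)) atTop (𝓝 Ly)) : Ly = Lx := by
  have hbound : ∀ᶠ n : ℕ in atTop, |f ((2 : ℝ) ^ n • y) - f ((2 : ℝ) ^ n • x)| ≤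
      8 * A / S ^ 3 * ‖y - x‖ * (1 / 4) ^ n := by
    filter_upwards [eventually_ge_atTop 1] with n hn
    have h2 : (2 : ℝ) ≤ 2 ^ n := by simpa using pow_le_pow_right₀ (one_le_two (α := ℝ)) hn
    refine (abs_sub_le_of_norm_fderiv_le hA (r := 2 ^ n * S / 2) (by positivity) (by nlinarith) hf
      hb fun z hz => norm_ge_of_mem_segment (by positivity) ?_ ?_ ?_ hz).trans (le_of_eq ?_)
    · rw [norm_smul, Real.norm_of_nonneg (by positivity)]; gcongr
    · rw [norm_smul, Real.norm_of_nonneg (by positivity)]; gcongr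
    · rw [inner_smul_left, inner_smul_right, RCLike.conj_to_real]; positivity
    · rw [← smul_sub, norm_smul, Real.norm_of_nonneg (by positivity)]
      have : (4 : ℝ) ^ n = 2 ^ n * 2 ^ n := by rw [← mul_pow]; norm_num
      rw [one_div, inv_pow, this]
      field_simp
      ring
  have hlim : Tendsto (fun n : ℕ => 8 * A / S ^ 3 * ‖y - x‖ * (1 / 4) ^ n) atTop (𝓝 0) := by
    simpa using (tendsto_pow_atTop_nhds_zero_of_lt_one (r := (1 / 4 : ℝ)) (by norm_num)
      (by norm_num)).const_mul (8 * A / S ^ 3 * ‖y - x‖)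
  have h0 := squeeze_zero_norm' (f := fun n : ℕ => f ((2 : ℝ) ^ n • y) - f ((2 : ℝ) ^ n • x))
    hbound hlim
  exact sub_eq_zero.1 (tendsto_nhds_unique (hLy.sub hLx) h0)

theorem exists_limit_at_infinity {f : E3 → ℝ} {A S : ℝ} (hA : 0 ≤ A) (hS : 0 < S)
    (hf : ∀ z, S ≤ ‖z‖ → DifferentiableAt ℝ f z)
    (hb : ∀ z, S ≤ ‖z‖ → ‖fderiv ℝ f z‖ ≤ A / ‖z‖ ^ 3) :
    ∃ L, ∀ x, S ≤ ‖x‖ → |f x - L| ≤ 2 * A / ‖x‖ ^ 2 := by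
  have hn : ∀ (s : ℝ) j, |s| = S → S ≤ ‖s • ee j‖ := fun s j hs => by simp [norm_smul, ee, hs]
  have h1 : S ≤ ‖S • ee 1‖ := hn _ _ (abs_of_pos hS)
  obtain ⟨L, hL, -⟩ := exists_limit_along_ray hA hS hf hb h1
  refine ⟨L, fun x hx => ?_⟩
  obtain ⟨Lx, hLx, hbx⟩ := exists_limit_along_ray hA hS hf hb hx
  obtain ⟨s, hs, hsx⟩ : ∃ s : ℝ, |s| = S ∧ 0 ≤ s * x 0 := by
    rcases le_total 0 (x 0) with h | h
    · exact ⟨S, abs_of_pos hS, by positivity⟩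
    · exact ⟨-S, by rw [abs_neg, abs_of_pos hS], by nlinarith⟩
  obtain ⟨Ls, hLs, -⟩ := exists_limit_along_ray hA hS hf hb (hn s 0 hs)
  have e1 : Ls = Lx := limits_along_rays_eq hA hS hf hb hx (hn s 0 hs)
    (by rw [inner_smul_right]; simpa [ee, EuclideanSpace.inner_single_right] using hsx) hLx hLs
  have e2 : L = Ls := limits_along_rays_eq hA hS hf hb (hn s 0 hs) h1
    (by simp [inner_smul_left, inner_smul_right, ee, EuclideanSpace.inner_single_right]) hLs hL
  rwa [e2, e1]

theorem IsNS.isNSComp {u : E3 → E3} {p : E3 → ℝ} {Ω : Set E3} (hΩ : IsOpen Ω)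
    (hu : ContDiffOn ℝ ∞ u Ω) (hp : ContDiffOn ℝ ∞ p Ω) (h : IsNS Ω u p) :
    IsNSComp (fun i x => u x i) p Ω where
  isOpen := hΩ
  smooth_v i := (EuclideanSpace.proj i : E3 →L[ℝ] ℝ).contDiff.comp_contDiffOn hu
  smooth_p := hp
  momentum x hx i := by
    have := h.1 x hx i
    simp only [lap]
    linarith
  div_free x hx := h.2 x hx

theorem exists_pdw_pressure_decay_of_length {M : ℝ} (hM : 0 < M) (k : ℕ) : ∃ C, 0 ≤ C ∧
    ∀ (v : Fin 3 → E3 → ℝ) (p : E3 → ℝ) (R Cstar : ℝ), 0 < R →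
      IsNSComp v p (closedBall 0 R)ᶜ → 0 ≤ Cstar → Cstar ≤ M →
      (∀ x ∈ (closedBall (0 : E3) R)ᶜ, ∀ j, |v j x| ≤ Cstar / (R + ‖x‖)) →
      ∀ x, 2 * R ≤ ‖x‖ → ∀ w : List (Fin 3), w.length = k → ∀ j,
        |pdw w (pd p j) x| ≤ C * Cstar / (R + ‖x‖) ^ (k + 3) := by
  choose C hC h using fun w => exists_pdw_pressure_decay hM w
  refine ⟨∑ w : List.Vector (Fin 3) k, C w.1, Finset.sum_nonneg fun w _ => hC _,
    fun v p R Cstar hR hv h0 hCM hb x hx w hw j => ?_⟩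
  have h1 := h w v p R Cstar hR hv hCM hb x hx j
  rw [hw] at h1
  refine h1.trans ?_
  gcongr
  exact Finset.single_le_sum (f := fun w : List.Vector (Fin 3) k => C w.1) (fun w _ => hC _)
    (Finset.mem_univ ⟨w, hw⟩)

end PressureDecay

theorem normalized_pressure_decay (M : ℝ) (hM : 0 < M) (k : ℕ) :
    ∃ c : ℝ, ∀ R₀ : ℝ, 0 < R₀ → ∀ (u : E3 → E3) (p : E3 → ℝ) (Cstar : ℝ),
      ContDiffOn ℝ (⊤ : ℕ∞) u (closedBall (0 : E3) R₀)ᶜ →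
      ContDiffOn ℝ (⊤ : ℕ∞) p (closedBall (0 : E3) R₀)ᶜ →
      IsNS (closedBall (0 : E3) R₀)ᶜ u p →
      (∀ x ∈ (closedBall (0 : E3) R₀)ᶜ, ‖u x‖ ≤ Cstar / (R₀ + ‖x‖)) →
      Cstar ≤ M →
      ∃ p₀ : ℝ, ∀ x : E3, 2 * R₀ ≤ ‖x‖ →
        ‖iteratedFDeriv ℝ k (fun y => p y - p₀) x‖ ≤ c * Cstar / (R₀ + ‖x‖) ^ (k + 2) := by
  obtain ⟨C, hC, h⟩ := exists_pdw_pressure_decay_of_length hM (k - 1)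
  refine ⟨3 ^ (k + 3) * C, fun R₀ hR u p Cstar hu hp hNS hb hCM => ?_⟩
  have hopen : IsOpen (closedBall (0 : E3) R₀)ᶜ := isClosed_closedBall.isOpen_compl
  have hv := hNS.isNSComp hopen hu hp
  have hmem : ∀ x : E3, 2 * R₀ ≤ ‖x‖ → x ∈ (closedBall (0 : E3) R₀)ᶜ := fun x hx => by
    simp only [Set.mem_compl_iff, mem_closedBall_zero_iff, not_le]
    linarith
  have hC0 : 0 ≤ Cstar := by
    have hx : 2 * R₀ ≤ ‖(2 * R₀) • ee 0‖ := by simp [norm_smul, ee, abs_of_pos hR]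
    by_contra hneg
    exact absurd ((norm_nonneg _).trans (hb _ (hmem _ hx)))
      (not_le.2 (div_neg_of_neg_of_pos (not_le.1 hneg) (by positivity)))
  have key := h _ p R₀ Cstar hR hv hC0 hCM fun x hx j => (abs_coord_le_norm _ j).trans (hb x hx)
  cases k with
  | zero =>
    obtain ⟨L, hL⟩ := exists_limit_at_infinity (f := p) (A := 3 * (C * Cstar)) (S := 2 * R₀)
      (by positivity) (by positivity)
      (fun z hz => smooth_differentiableAt hopen hp (hmem z hz))
      (fun z hz => by
        have hz0 : 0 < ‖z‖ := by linarith
        rw [mul_div_assoc]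
        refine norm_fderiv_le_of_pd fun j => (key z hz [] rfl j).trans ?_
        simp only [Nat.zero_sub, zero_add]
        gcongr
        linarith)
    refine ⟨L, fun x hx => ?_⟩
    have hx0 : 0 < ‖x‖ := by linarith
    rw [norm_iteratedFDeriv_zero]
    refine (hL x hx).trans ?_
    rw [div_le_div_iff₀ (by positivity) (by positivity)]
    calc 2 * (3 * (C * Cstar)) * (R₀ + ‖x‖) ^ (0 + 2)
        ≤ 2 * (3 * (C * Cstar)) * (3 / 2 * ‖x‖) ^ (0 + 2) := by gcongr; linarith
      _ = 27 / 2 * (C * Cstar * ‖x‖ ^ 2) := by ring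
      _ ≤ 27 * (C * Cstar * ‖x‖ ^ 2) := by gcongr; norm_num
      _ = _ := by ring
  | succ k =>
    refine ⟨0, fun x hx => ?_⟩
    simp only [sub_zero]
    refine (norm_iteratedFDeriv_le_of_pdw hopen (hmem x hx) (k + 1) hp
      (B := C * Cstar / (R₀ + ‖x‖) ^ (k + 3)) ?_).trans ?_
    · rintro (_ | ⟨j, w⟩) hw
      · simp at hw
      · exact key x hx w (by simpa using hw) j
    · rw [← mul_div_assoc, ← mul_assoc]
      have : 0 < ‖x‖ := by linarith
      gcongr
      · norm_num
      · norm_num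
      · omega
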